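/- Let k be a finite field and V a finite-dimensional k-vector space. For every automorphism φ of the scheme Ω(V) over k there exists a unique automorphism ψ of the projective space P(V) over k such that ψ ∘ ι = ι ∘ φ, where ι : Ω(V) → P(V) denotes the open immersion. (Equivalently, the restriction map Aut_k(P(V)) → Aut_k(Ω(V)) is bijective.) -/

import Mathlib

open AlgebraicGeometry CategoryTheory MvPolynomial Module

attribute [local instance] MvPolynomial.gradedAlgebra

/-- The projective space `P(V)` over `k` for an `m`-dimensional vector space `V`:
the Proj of the polynomial ring in `m` variables over `k` with its standard
grading (equivalently, of `Sym V`). -/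
noncomputable abbrev projSpace (k : Type*) [Field k] (m : ℕ) : Scheme :=
  Proj (homogeneousSubmodule (Fin m) k)

/-- The set of points of `P(V)` lying on no `k`-rational hyperplane, i.e. in the
complement of the zero locus of every nonzero linear form. -/
def drinfeldSet (k : Type*) [Field k] (m : ℕ) : Set (projSpace k m) :=
  {x | ∀ c : Fin m → k, c ≠ 0 →
    (∑ i, MvPolynomial.C (c i) * MvPolynomial.X i) ∉ x.asHomogeneousIdeal}

lemma isOpen_drinfeldSet (k : Type*) [Field k] [Fintype k] (m : ℕ) :
    IsOpen (drinfeldSet k m) := by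
  have : drinfeldSet k m = ⋂ c : {c : Fin m → k // c ≠ 0},
      (Proj.basicOpen (homogeneousSubmodule (Fin m) k)
        (∑ i, MvPolynomial.C (c.1 i) * MvPolynomial.X i) : Set (projSpace k m)) := by
    ext x
    simp only [drinfeldSet, Set.mem_setOf_eq, Set.mem_iInter, Subtype.forall]
    rfl
  rw [this]
  exact isOpen_iInter_of_finite fun c =>
    (Proj.basicOpen (homogeneousSubmodule (Fin m) k) _).isOpen

/-- The Drinfeld half-space `Ω(V)` as an open subset of `P(V)`. -/
def drinfeldOpens (k : Type*) [Field k] [Fintype k] (m : ℕ) : (projSpace k m).Opens :=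
  ⟨drinfeldSet k m, isOpen_drinfeldSet k m⟩

/-- The Drinfeld half-space `Ω(V)` as a scheme. -/
noncomputable abbrev drinfeldScheme (k : Type*) [Field k] [Fintype k] (m : ℕ) : Scheme :=
  (drinfeldOpens k m).toScheme

/-- The open immersion `ι : Ω(V) → P(V)`. -/
noncomputable def drinfeldι (k : Type*) [Field k] [Fintype k] (m : ℕ) :
    drinfeldScheme k m ⟶ projSpace k m :=
  (drinfeldOpens k m).ι

/-- The structure morphism `P(V) ⟶ Spec k`. -/
noncomputable def projStruct (k : Type*) [Field k] (m : ℕ) :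
    projSpace k m ⟶ Spec (CommRingCat.of k) :=
  Proj.toSpecZero (homogeneousSubmodule (Fin m) k) ≫
    Spec.map (CommRingCat.ofHom
      ((GradedRing.projZeroRingHom' (homogeneousSubmodule (Fin m) k)).comp
        (algebraMap k (MvPolynomial (Fin m) k))))

/-- The structure morphism `Ω(V) ⟶ Spec k`. -/
noncomputable def drinfeldStruct (k : Type*) [Field k] [Fintype k] (m : ℕ) :
    drinfeldScheme k m ⟶ Spec (CommRingCat.of k) :=
  drinfeldι k m ≫ projStruct k m

/-!
Let `F` be the product of the nonzero linear forms, so that `Ω(V)` is the spectrum of the ring of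
fractions `s / F ^ m` of degree `0`. By unique factorisation the units of this ring are, up to
constants, the products of degree `0` of integral powers of linear forms. Hence the homomorphisms
from its units to `ℤ` are the functions from the set of lines of `V` to `ℤ`, up to constants.

Such a homomorphism `f` satisfies `min (f u) (f v) ≤ f (u + v)`, a condition in terms of the ring
alone, if and only if the function is an integral norm on `V`: in a basis adapted to the norm, the
norm extends to a monomial valuation. An automorphism of `Ω(V)` therefore acts linearly on functions
modulo constants and preserves the classes of norms. The indecomposable classes are those of the
indicators of nonzero proper subspaces, and the sum of two of them is the class of a norm if and
only if the subspaces are comparable. Modulo `|k|`, the values of the indicator of a nonzero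
subspace sum to `1` over the points of a hyperplane that meets the subspace and to `0` over those of
a complement. This rules out that lines are exchanged with hyperplanes, so the automorphism permutes
the indicators of lines.

Thus it maps each quotient of two linear forms to a constant times such a quotient, which forces it
to be induced by a linear automorphism of `V`, and the action of the latter on `P(V)` is the desired
extension. The extension is unique because `Ω(V)` is dense in the reduced and separated scheme
`P(V)`.
-/

namespace Drinfeld

open scoped LinearAlgebra.Projectivization

section Norms

variable {k V : Type*} [DivisionRing k] [AddCommGroup V] [Module k V]
  {α β : ℙ k V → ℤ} {U W : Submodule k V} {p q r : ℙ k V}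

/-- An integral norm on the vector space `V`, written additively as a valuation that is trivial
on the scalars and hence seen as a function on the points of `ℙ k V`. -/
def IsNorm (α : ℙ k V → ℤ) : Prop :=
  ∀ ⦃p q r : ℙ k V⦄, r.submodule ≤ p.submodule ⊔ q.submodule → min (α p) (α q) ≤ α r

lemma isAtom_submodule (p : ℙ k V) : IsAtom p.submodule := by
  rw [p.submodule_eq]
  exact nonzero_span_atom p.rep p.rep_nonzero

lemma submodule_le_iff : p.submodule ≤ U ↔ p.rep ∈ U := by
  rw [p.submodule_eq, Submodule.span_singleton_le_iff_mem]

lemma exists_submodule_eq_of_isAtom (hU : IsAtom U) : ∃ p : ℙ k V, p.submodule = U := by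
  obtain ⟨v, hv, rfl⟩ := (atom_iff_nonzero_span U).mp hU
  exact ⟨.mk k v hv, Projectivization.submodule_mk v hv⟩

lemma exists_submodule_le_not_le (h : ¬ U ≤ W) :
    ∃ p : ℙ k V, p.submodule ≤ U ∧ ¬ p.submodule ≤ W := by
  obtain ⟨v, hvU, hvW⟩ := SetLike.not_le_iff_exists.mp h
  have hv : v ≠ 0 := by rintro rfl; exact hvW W.zero_mem
  exact ⟨.mk k v hv, by simpa using hvU, by simpa using hvW⟩

lemma eq_of_rep_eq_smul_rep {c : k} (h : p.rep = c • q.rep) : p = q := by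
  rw [← p.mk_rep, ← q.mk_rep, Projectivization.mk_eq_mk_iff']
  exact ⟨c, h.symm⟩

lemma exists_third_point (hpq : p ≠ q) : ∃ r : ℙ k V,
    r.submodule ≤ p.submodule ⊔ q.submodule ∧ p.submodule ≤ q.submodule ⊔ r.submodule ∧
      q.submodule ≤ p.submodule ⊔ r.submodule := by
  have hp : p.rep ∈ p.submodule := submodule_le_iff.mp le_rfl
  have hq : q.rep ∈ q.submodule := submodule_le_iff.mp le_rfl
  have hne : p.rep + q.rep ≠ 0 := fun h ↦ hpq <|
    eq_of_rep_eq_smul_rep (c := -1) (by simpa using eq_neg_of_add_eq_zero_left h)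
  have hr : p.rep + q.rep ∈ (Projectivization.mk k _ hne).submodule := by simp
  refine ⟨.mk k _ hne, ?_, ?_, ?_⟩
  · rw [Projectivization.submodule_mk, Submodule.span_singleton_le_iff_mem]
    exact Submodule.add_mem_sup hp hq
  · simpa [submodule_le_iff] using Submodule.add_mem_sup (neg_mem hq) hr
  · simpa [submodule_le_iff] using Submodule.add_mem_sup (neg_mem hp) hr

namespace IsNorm

lemma comp_monotone (hα : IsNorm α) {f : ℤ → ℤ} (hf : Monotone f) : IsNorm (f ∘ α) :=
  fun _ _ _ h ↦ hf.map_min.symm.trans_le (hf (hα h))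

lemma add (hα : IsNorm α) (hβ : IsNorm β) (hαβ : Monovary α β) : IsNorm (α + β) := by
  intro p q r h
  have hα := hα h
  have hβ := hβ h
  simp only [Pi.add_apply]
  rcases lt_trichotomy (β p) (β q) with hlt | heq | hlt
  · have := hαβ hlt
    lia
  · lia
  · have := hαβ hlt
    lia

lemma monovary_of_add (hα : IsNorm α) (hβ : IsNorm β) (h : IsNorm (α + β)) :
    Monovary α β := by
  intro p q hβpq
  by_contra! hαpq
  obtain ⟨r, hr, hp, hq⟩ := exists_third_point (p := p) (q := q) (by rintro rfl; simp at hβpq)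
  have hαr := hα hq
  have hαr' := hα hp
  have hβr := hβ hp
  have hsum : min (α p + β p) (α q + β q) ≤ α r + β r := h hr
  lia

lemma add_iff (hα : IsNorm α) (hβ : IsNorm β) : IsNorm (α + β) ↔ Monovary α β :=
  ⟨hα.monovary_of_add hβ, hα.add hβ⟩

lemma exists_superlevel (hα : IsNorm α) (n : ℤ) :
    ∃ U : Submodule k V, ∀ p, n ≤ α p ↔ p.submodule ≤ U := by
  let S : Projectivization.Subspace k V :=
    { carrier := {p | n ≤ α p}
      mem_add' := fun v w hv hw hvw hnv hnw ↦ (le_min hnv hnw).trans <| hα <| by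
        simp only [Projectivization.submodule_mk, Submodule.span_singleton_le_iff_mem]
        exact Submodule.add_mem_sup (Submodule.mem_span_singleton_self v)
          (Submodule.mem_span_singleton_self w) }
  refine ⟨Projectivization.Subspace.submodule S, fun p ↦ ?_⟩
  rw [submodule_le_iff, Projectivization.Subspace.mem_submodule_iff S p.rep_nonzero,
    Projectivization.mk_rep]
  rfl

end IsNorm

/-- The norm with values `1` on the points of the subspace `U` and `0` on all other points. -/
noncomputable def ind (U : Submodule k V) : ℙ k V → ℤ := Set.indicator {p | p.submodule ≤ U} 1

lemma ind_of_le (h : p.submodule ≤ U) : ind U p = 1 := Set.indicator_of_mem h 1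

lemma ind_of_not_le (h : ¬ p.submodule ≤ U) : ind U p = 0 := Set.indicator_of_notMem h 1

lemma ind_submodule [DecidableEq (ℙ k V)] (p : ℙ k V) : ind p.submodule = Pi.single p 1 := by
  ext q
  by_cases h : q.submodule ≤ p.submodule
  · obtain rfl := Projectivization.submodule_injective
      (((isAtom_submodule p).le_iff_eq (isAtom_submodule q).1).mp h)
    simp [ind_of_le]
  · rw [ind_of_not_le h, Pi.single_eq_of_ne (by rintro rfl; exact h le_rfl)]

lemma ind_le_one (U : Submodule k V) (p : ℙ k V) : ind U p ≤ 1 :=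
  Set.indicator_le_self' (fun _ _ ↦ zero_le_one) p

lemma ind_nonneg (U : Submodule k V) (p : ℙ k V) : 0 ≤ ind U p :=
  Set.indicator_nonneg (fun _ _ ↦ zero_le_one) p

lemma isNorm_ind (U : Submodule k V) : IsNorm (ind U) := by
  intro p q r hr
  by_cases hpq : p.submodule ≤ U ∧ q.submodule ≤ U
  · simp [ind_of_le hpq.1, ind_of_le hpq.2, ind_of_le (hr.trans (sup_le hpq.1 hpq.2))]
  · have hnonneg := ind_nonneg U r
    rcases not_and_or.mp hpq with h | h <;> simp [ind_of_not_le h, hnonneg]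

lemma monovary_ind_iff : Monovary (ind U) (ind W) ↔ U ≤ W ∨ W ≤ U := by
  constructor
  · contrapose!
    rintro ⟨hUW, hWU⟩ hmono
    obtain ⟨p, hpU, hpW⟩ := exists_submodule_le_not_le hUW
    obtain ⟨q, hqW, hqU⟩ := exists_submodule_le_not_le hWU
    have := @hmono p q (by simp [ind_of_le hqW, ind_of_not_le hpW])
    simp [ind_of_le hpU, ind_of_not_le hqU] at this
  · intro h p q hpq
    have hqW : q.submodule ≤ W := by
      by_contra hqW
      exact (ind_nonneg W p).not_gt (ind_of_not_le hqW ▸ hpq)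
    have hpW : ¬ p.submodule ≤ W := fun hpW ↦ by simp [ind_of_le hqW, ind_of_le hpW] at hpq
    rcases h with hUW | hWU
    · exact (ind_of_not_le fun hpU ↦ hpW (hpU.trans hUW)).trans_le (ind_nonneg U q)
    · exact (ind_le_one U p).trans_eq (ind_of_le (hqW.trans hWU)).symm

end Norms

section Classes

variable {k V : Type*} [DivisionRing k] [AddCommGroup V] [Module k V]
  {α β : ℙ k V → ℤ} {U W : Submodule k V}

/-- Integer-valued functions on `X` modulo constant functions. On `ℙ k V` this is the home of
homothety classes of norms. -/
abbrev ModConst (X : Type*) : Type _ := (X → ℤ) ⧸ AddSubgroup.zmultiples (1 : X → ℤ)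

/-- The class of a function modulo constant functions. -/
abbrev cls {X : Type*} : (X → ℤ) →+ ModConst X := QuotientAddGroup.mk' _

lemma cls_eq_cls_iff {X : Type*} {α β : X → ℤ} :
    cls α = cls β ↔ ∃ c : ℤ, ∀ x, β x = α x + c := by
  simp only [cls, QuotientAddGroup.mk'_eq_mk', AddSubgroup.mem_zmultiples_iff, funext_iff]
  exact ⟨fun ⟨_, ⟨c, hc⟩, h⟩ ↦ ⟨c, fun x ↦ by simp [← h x, ← hc x]⟩,
    fun ⟨c, h⟩ ↦ ⟨_, ⟨c, fun _ ↦ rfl⟩, by simp_all⟩⟩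

lemma cls_eq_zero_iff {X : Type*} {α : X → ℤ} : cls α = 0 ↔ ∃ c : ℤ, ∀ x, α x = c := by
  rw [eq_comm, ← map_zero cls, cls_eq_cls_iff]
  simp

/-- The classes modulo constants of norms, that is, the homothety classes of norms. -/
def IsNormClass (x : ModConst (ℙ k V)) : Prop := ∃ α, IsNorm α ∧ cls α = x

lemma isNormClass_cls : IsNormClass (cls α) ↔ IsNorm α := by
  refine ⟨fun ⟨β, hβ, hαβ⟩ ↦ ?_, fun h ↦ ⟨α, h, rfl⟩⟩
  obtain ⟨c, hc⟩ := cls_eq_cls_iff.mp hαβ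
  obtain rfl : α = (· + c) ∘ β := funext hc
  exact hβ.comp_monotone fun _ _ h ↦ add_le_add_left h c

/-- A nonzero norm class that is not the sum of two nonzero norm classes. -/
structure IsIndecomposable (x : ModConst (ℙ k V)) : Prop where
  isNormClass : IsNormClass x
  ne_zero : x ≠ 0
  eq_zero_or_eq_zero : ∀ ⦃y z⦄, IsNormClass y → IsNormClass z → x = y + z → y = 0 ∨ z = 0

lemma cls_ind_ne_zero (hU : U ∈ Set.Ioo ⊥ ⊤) : cls (ind U) ≠ 0 := by
  obtain ⟨p, hp, -⟩ := exists_submodule_le_not_le hU.1.not_ge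
  obtain ⟨q, -, hq⟩ := exists_submodule_le_not_le hU.2.not_ge
  rw [Ne, cls_eq_zero_iff]
  rintro ⟨c, hc⟩
  exact zero_ne_one <| (ind_of_not_le hq).symm.trans <| (hc q).trans <|
    (hc p).symm.trans (ind_of_le hp)

lemma mem_Ioo_of_cls_ind_ne_zero (h : cls (ind U) ≠ 0) : U ∈ Set.Ioo ⊥ ⊤ := by
  rw [Ne, cls_eq_zero_iff] at h
  refine ⟨bot_lt_iff_ne_bot.mpr ?_, lt_top_iff_ne_top.mpr ?_⟩
  · rintro rfl
    exact h ⟨0, fun p ↦ ind_of_not_le fun hp ↦ (isAtom_submodule p).1 (le_bot_iff.mp hp)⟩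
  · rintro rfl
    exact h ⟨1, fun p ↦ ind_of_le le_top⟩

lemma cls_ind_injOn : Set.InjOn (fun U : Submodule k V ↦ cls (ind U)) (Set.Ioo ⊥ ⊤) := by
  have key ⦃U W : Submodule k V⦄ (hU : U ∈ Set.Ioo ⊥ ⊤) (h : cls (ind U) = cls (ind W)) :
      U ≤ W := by
    obtain ⟨c, hc⟩ := cls_eq_cls_iff.mp h
    by_contra hUW
    obtain ⟨p, hpU, hpW⟩ := exists_submodule_le_not_le hUW
    obtain ⟨q, -, hqU⟩ := exists_submodule_le_not_le hU.2.not_ge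
    have hp := hc p
    rw [ind_of_le hpU, ind_of_not_le hpW] at hp
    have hq := hc q
    rw [ind_of_not_le hqU] at hq
    have := ind_nonneg W q
    lia
  exact fun U hU W hW h ↦ (key hU h).antisymm (key hW h.symm)

lemma isIndecomposable_cls_ind (hU : U ∈ Set.Ioo ⊥ ⊤) : IsIndecomposable (cls (ind U)) where
  isNormClass := isNormClass_cls.mpr (isNorm_ind U)
  ne_zero := cls_ind_ne_zero hU
  eq_zero_or_eq_zero := by
    rintro _ _ ⟨β, hβ, rfl⟩ ⟨γ, hγ, rfl⟩ h
    have hmono : Monovary β γ := hβ.monovary_of_add hγ <|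
      isNormClass_cls.mp <| by rw [map_add, ← h]; exact isNormClass_cls.mpr (isNorm_ind U)
    obtain ⟨c, hc⟩ := cls_eq_cls_iff.mp (h.trans (map_add cls β γ).symm)
    simp only [Pi.add_apply] at hc
    obtain ⟨p, hpU, -⟩ := exists_submodule_le_not_le hU.1.not_ge
    obtain ⟨q, -, hqU⟩ := exists_submodule_le_not_le hU.2.not_ge
    have hconst (r s : ℙ k V) (hrs : ind U r = ind U s) : β r = β s ∧ γ r = γ s := by
      have h₁ := @hmono r s
      have h₂ := @hmono s r
      have := hc r
      have := hc s
      lia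
    have hstep : β p = β q ∨ γ p = γ q := by
      have h₁ := @hmono p q
      have h₂ := @hmono q p
      have hp := hc p
      have hq := hc q
      rw [ind_of_le hpU] at hp
      rw [ind_of_not_le hqU] at hq
      lia
    have hvalue (r : ℙ k V) : (β r = β p ∧ γ r = γ p) ∨ (β r = β q ∧ γ r = γ q) := by
      by_cases hr : r.submodule ≤ U
      · exact .inl (hconst r p (by rw [ind_of_le hr, ind_of_le hpU]))
      · exact .inr (hconst r q (by rw [ind_of_not_le hr, ind_of_not_le hqU]))
    exact hstep.imp
      (fun h ↦ cls_eq_zero_iff.mpr ⟨β p, fun r ↦ by grind⟩)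
      (fun h ↦ cls_eq_zero_iff.mpr ⟨γ p, fun r ↦ by grind⟩)

-- If `U` is the locus where `α` is maximal, then `α` is the sum of `ind U` and the truncation
-- of `α` just below its maximum.
lemma IsIndecomposable.exists_eq_cls_ind [Finite (ℙ k V)] {x : ModConst (ℙ k V)}
    (hx : IsIndecomposable x) : ∃ U ∈ Set.Ioo ⊥ ⊤, x = cls (ind U) := by
  obtain ⟨α, hα, rfl⟩ := hx.isNormClass
  have hne : Nonempty (ℙ k V) := by
    by_contra h
    exact hx.ne_zero (cls_eq_zero_iff.mpr ⟨0, fun p ↦ (h ⟨p⟩).elim⟩)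
  obtain ⟨p₀, hp₀⟩ := Finite.exists_max α
  obtain ⟨U, hU⟩ := hα.exists_superlevel (α p₀)
  have hβ : IsNorm ((min · (α p₀ - 1)) ∘ α) := hα.comp_monotone fun _ _ h ↦ min_le_min_right _ h
  have hsum : α = (min · (α p₀ - 1)) ∘ α + ind U := by
    ext p
    have := hp₀ p
    by_cases hp : p.submodule ≤ U
    · have := (hU p).mpr hp
      simp only [Pi.add_apply, Function.comp_apply, ind_of_le hp]
      lia
    · have := mt (hU p).mp hp
      simp only [Pi.add_apply, Function.comp_apply, ind_of_not_le hp]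
      lia
  have hcls : cls α = cls ((min · (α p₀ - 1)) ∘ α) + cls (ind U) := by rw [← map_add, ← hsum]
  have hind : cls (ind U) ≠ 0 := fun h ↦ hx.ne_zero <| by
    obtain ⟨c, hc⟩ := cls_eq_zero_iff.mp h
    refine cls_eq_zero_iff.mpr ⟨α p₀, fun p ↦ (hp₀ p).antisymm <| (hU p).mpr ?_⟩
    by_contra hp
    exact zero_ne_one <| (ind_of_not_le hp).symm.trans <| (hc p).trans <|
      (hc p₀).symm.trans (ind_of_le ((hU p₀).mp le_rfl))
  have hβ0 := (hx.eq_zero_or_eq_zero (isNormClass_cls.mpr hβ)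
    (isNormClass_cls.mpr (isNorm_ind U)) hcls).resolve_right hind
  exact ⟨U, mem_Ioo_of_cls_ind_ne_zero hind, by rw [hcls, hβ0, zero_add]⟩

end Classes

section Flags

variable {k V : Type*} [DivisionRing k] [AddCommGroup V] [Module k V]

/-- The permutation `f` of the nonzero proper subspaces of `V` preserves and reflects
comparability, that is, it is an automorphism of the incidence graph of `ℙ k V`. -/
def PreservesComparability (f : Set.Ioo (⊥ : Submodule k V) ⊤ ≃ Set.Ioo (⊥ : Submodule k V) ⊤) :
    Prop :=
  ∀ U W, f U ≤ f W ∨ f W ≤ f U ↔ U ≤ W ∨ W ≤ U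

namespace PreservesComparability

variable {f : Set.Ioo (⊥ : Submodule k V) ⊤ ≃ Set.Ioo (⊥ : Submodule k V) ⊤}
  {l m : Set.Ioo (⊥ : Submodule k V) ⊤}

lemma symm (hf : PreservesComparability f) : PreservesComparability f.symm := fun U W ↦ by
  simpa using (hf (f.symm U) (f.symm W)).symm

lemma lt_of_isAtom (hf : PreservesComparability f) (hl : IsAtom l.1)
    {X : Set.Ioo (⊥ : Submodule k V) ⊤} (hX : X ≠ f l) (h : X ≤ f l ∨ f l ≤ X) :
    l < f.symm X := by
  have hne : f.symm X ≠ l := fun h ↦ hX (by rw [← h, f.apply_symm_apply])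
  refine lt_of_le_of_ne (((hf _ _).mp (by simpa using h)).resolve_left fun hle ↦ hne ?_) hne.symm
  exact Subtype.ext ((hl.le_iff_eq (f.symm X).2.1.ne').mp hle)

-- A chain `X < f l < Y` pulls back to two comparable subspaces above `l`; a plane through `l`
-- avoiding both is comparable to `l` but to neither of them.
lemma not_lt_and_lt (hf : PreservesComparability f) (hl : IsAtom l.1)
    (X Y : Set.Ioo (⊥ : Submodule k V) ⊤) : ¬ (X < f l ∧ f l < Y) := by
  rintro ⟨hX, hY⟩
  have hlX : l.1 < (f.symm X).1 := hf.lt_of_isAtom hl hX.ne (.inl hX.le)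
  have hlY : l.1 < (f.symm Y).1 := hf.lt_of_isAtom hl hY.ne' (.inr hY.le)
  obtain ⟨w, hwX, hwY⟩ : ∃ w, w ∉ (f.symm X).1 ∧ w ∉ (f.symm Y).1 := by
    have hXY : f.symm X ≤ f.symm Y ∨ f.symm Y ≤ f.symm X :=
      (hf _ _).mp (by simpa using Or.inl (hX.trans hY).le)
    rcases hXY with h | h
    · obtain ⟨w, -, hw⟩ := SetLike.exists_of_lt (f.symm Y).2.2
      exact ⟨w, fun hwX ↦ hw (h hwX), hw⟩
    · obtain ⟨w, -, hw⟩ := SetLike.exists_of_lt (f.symm X).2.2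
      exact ⟨w, hw, fun hwY ↦ hw (h hwY)⟩
  let C : Submodule k V := l.1 ⊔ Submodule.span k {w}
  have hwC : w ∈ C := Submodule.mem_sup_right (Submodule.mem_span_singleton_self w)
  have hcov : l.1 ⋖ C := by
    rw [show C = Submodule.span k {w} ⊔ l.1 from sup_comm ..]
    exact Submodule.covBy_span_singleton_sup fun hwl ↦ hwX (hlX.le hwl)
  have hincomp {A : Submodule k V} (hlA : l.1 < A) (hwA : w ∉ A) : ¬ C ≤ A ∧ ¬ A ≤ C :=
    ⟨fun h ↦ hwA (h hwC), fun h ↦ hcov.2 hlA (h.lt_of_ne fun h ↦ hwA (h ▸ hwC))⟩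
  have hC : C < ⊤ := lt_top_iff_ne_top.mpr fun h ↦ (hincomp hlX hwX).2 (le_top.trans_eq h.symm)
  let C' : Set.Ioo (⊥ : Submodule k V) ⊤ := ⟨C, l.2.1.trans hcov.lt, hC⟩
  rcases (hf l C').mpr (.inl hcov.le) with h | h
  · have := (hf (f.symm X) C').mp (.inl (by simpa using hX.le.trans h))
    exact this.elim (hincomp hlX hwX).2 (hincomp hlX hwX).1
  · have := (hf C' (f.symm Y)).mp (.inl (by simpa using h.trans hY.le))
    exact this.elim (hincomp hlY hwY).1 (hincomp hlY hwY).2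

lemma isAtom_apply_of_isAtom_apply (hf : PreservesComparability f) (hl : IsAtom l.1)
    (hfl : IsAtom (f l).1) (hm : IsAtom m.1) : IsAtom (f m).1 := by
  by_contra hfm
  have hdisj : Disjoint l.1 m.1 := hl.disjoint_of_ne hm fun h ↦ hfm (Subtype.ext h ▸ hfl)
  obtain ⟨X, hXm, hX0⟩ : ∃ X : Submodule k V, X < (f m).1 ∧ X ≠ ⊥ := by
    simpa [IsAtom, (f m).2.1.ne'] using hfm
  let X' : Set.Ioo (⊥ : Submodule k V) ⊤ := ⟨X, hX0.bot_lt, hXm.trans (f m).2.2⟩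
  have hmX : m.1 < (f.symm X').1 := hf.lt_of_isAtom hm (X := X') (ne_of_lt hXm) (.inl hXm.le)
  have hcov : m.1 ⋖ l.1 ⊔ m.1 :=
    covBy_sup_of_inf_covBy_left (by rw [hdisj.eq_bot]; exact hl.bot_covBy)
  have hC : l.1 ⊔ m.1 < ⊤ := lt_top_iff_ne_top.mpr fun h ↦
    hcov.2 hmX ((f.symm X').2.2.trans_eq h.symm)
  let C : Set.Ioo (⊥ : Submodule k V) ⊤ := ⟨l.1 ⊔ m.1, m.2.1.trans hcov.lt, hC⟩
  have hflC : f l ≤ f C := ((hf l C).mpr (.inl (le_sup_left : l.1 ≤ _))).elim id fun h ↦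
    ((hfl.le_iff_eq (f C).2.1.ne').mp h).ge
  have hmC : m < C := hcov.lt
  have hCm : f C ≤ f m := ((hf m C).mpr (.inl hmC.le)).resolve_left fun h ↦
    hf.not_lt_and_lt hm X' (f C) ⟨hXm, h.lt_of_ne (f.injective.ne hmC.ne)⟩
  exact ((hf l m).mp (.inl (hflC.trans hCm))).elim
    (fun h ↦ hl.1 (hdisj.eq_bot_of_le h)) (fun h ↦ hm.1 (hdisj.symm.eq_bot_of_le h))

lemma isAtom_apply_iff (hf : PreservesComparability f) (hl : IsAtom l.1) (hfl : IsAtom (f l).1) :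
    IsAtom (f m).1 ↔ IsAtom m.1 :=
  ⟨fun hm ↦ by simpa using hf.symm.isAtom_apply_of_isAtom_apply hfl (by simpa) hm,
    hf.isAtom_apply_of_isAtom_apply hl hfl⟩

end PreservesComparability

end Flags

section PointCount

variable {k V : Type*} [DivisionRing k] [AddCommGroup V] [Module k V] {U W : Submodule k V}

lemma card_points_le (U : Submodule k V) :
    Nat.card {p : ℙ k V // p.submodule ≤ U} = Nat.card (ℙ k U) := by
  have hmem (q : ℙ k U) :
      (Projectivization.map U.subtype U.subtype_injective q).submodule ≤ U := by
    induction q using Projectivization.ind with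
    | h v _ => simp [Projectivization.map_mk]
  refine (Nat.card_congr (Equiv.ofBijective (fun q : ℙ k U ↦ ⟨_, hmem q⟩) ⟨?_, ?_⟩)).symm
  · exact fun q q' h ↦ Projectivization.map_injective _ U.subtype_injective (congrArg Subtype.val h)
  · rintro ⟨p, hp⟩
    have hne : (⟨p.rep, submodule_le_iff.mp hp⟩ : U) ≠ 0 :=
      fun h ↦ p.rep_nonzero (congrArg Subtype.val h)
    exact ⟨.mk k _ hne, Subtype.ext (by simp [Projectivization.map_mk])⟩

lemma card_points_le_eq_one [Finite k] [Module.Finite k V] (hU : U ≠ ⊥) :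
    (Nat.card {p : ℙ k V // p.submodule ≤ U} : ZMod (Nat.card k)) = 1 := by
  have : Nontrivial U := U.nontrivial_iff_ne_bot.mpr hU
  obtain ⟨n, hn⟩ := Nat.exists_eq_succ_of_ne_zero (finrank_pos (R := k) (M := U)).ne'
  rw [card_points_le, Projectivization.card_of_finrank k _ hn, Finset.sum_range_succ']
  simp

variable [Finite (ℙ k V)]

open scoped Classical in
/-- The sum of the values of a function over the points of the subspace `U`, modulo the number of
scalars. -/
noncomputable def pointSum (U : Submodule k V) : (ℙ k V → ℤ) →+ ZMod (Nat.card k) :=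
  letI := Fintype.ofFinite (ℙ k V)
  (Int.castAddHom _).comp (∑ p with p.submodule ≤ U, Pi.evalAddMonoidHom _ p)

lemma pointSum_ind_eq_card (U W : Submodule k V) :
    pointSum W (ind U) = (Nat.card {p : ℙ k V // p.submodule ≤ U ⊓ W} : ZMod (Nat.card k)) := by
  classical
  let := Fintype.ofFinite (ℙ k V)
  simp [pointSum, ind, Set.indicator_apply, Finset.filter_filter, Fintype.card_subtype, and_comm]

lemma pointSum_ind [Finite k] [Module.Finite k V] (h : U ⊓ W ≠ ⊥) : pointSum W (ind U) = 1 := by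
  rw [pointSum_ind_eq_card, card_points_le_eq_one h]

lemma pointSum_ind_of_disjoint (h : Disjoint U W) : pointSum W (ind U) = 0 := by
  rw [pointSum_ind_eq_card, h.eq_bot, card_points_le]
  simp

end PointCount

section NormClassAutomorphisms

variable {k V : Type*} [DivisionRing k] [AddCommGroup V] [Module k V]

/-- The class of `ind U` as an indecomposable class. -/
noncomputable def indClass (U : Set.Ioo (⊥ : Submodule k V) ⊤) :
    {x : ModConst (ℙ k V) // IsIndecomposable x} :=
  ⟨cls (ind U.1), isIndecomposable_cls_ind U.2⟩

variable {Φ : ModConst (ℙ k V) ≃+ ModConst (ℙ k V)}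

lemma IsIndecomposable.map (hΦ : ∀ x, IsNormClass (Φ x) ↔ IsNormClass x) {x : ModConst (ℙ k V)}
    (hx : IsIndecomposable x) : IsIndecomposable (Φ x) where
  isNormClass := (hΦ x).mpr hx.isNormClass
  ne_zero := by simpa using hx.ne_zero
  eq_zero_or_eq_zero y z hy hz hxyz := by
    simpa using hx.eq_zero_or_eq_zero (y := Φ.symm y) (z := Φ.symm z)
      ((hΦ _).mp (by simpa)) ((hΦ _).mp (by simpa))
      (by rw [← map_add, ← hxyz, Φ.symm_apply_apply])

lemma isIndecomposable_apply_iff (hΦ : ∀ x, IsNormClass (Φ x) ↔ IsNormClass x)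
    (x : ModConst (ℙ k V)) : IsIndecomposable x ↔ IsIndecomposable (Φ x) :=
  ⟨fun hx ↦ hx.map hΦ, fun hx ↦ by
    simpa using hx.map (Φ := Φ.symm) fun y ↦ by simpa using (hΦ (Φ.symm y)).symm⟩

lemma submodule_mem_Ioo [Nontrivial (ℙ k V)] (p : ℙ k V) : p.submodule ∈ Set.Ioo ⊥ ⊤ := by
  refine ⟨(isAtom_submodule p).1.bot_lt, lt_top_iff_ne_top.mpr fun h ↦ ?_⟩
  obtain ⟨q, hq⟩ := exists_ne p
  exact hq <| Projectivization.submodule_injective <|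
    ((isAtom_submodule p).le_iff_eq (isAtom_submodule q).1).mp (h ▸ le_top)

variable [Finite (ℙ k V)]

lemma indClass_bijective : Function.Bijective (indClass (k := k) (V := V)) := by
  refine ⟨fun U W h ↦ Subtype.ext (cls_ind_injOn U.2 W.2 (congrArg Subtype.val h)), fun x ↦ ?_⟩
  obtain ⟨U, hU, hx⟩ := x.2.exists_eq_cls_ind
  exact ⟨⟨U, hU⟩, Subtype.ext hx.symm⟩

lemma exists_preservesComparability (hΦ : ∀ x, IsNormClass (Φ x) ↔ IsNormClass x) :
    ∃ f : Set.Ioo (⊥ : Submodule k V) ⊤ ≃ Set.Ioo (⊥ : Submodule k V) ⊤,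
      PreservesComparability f ∧ ∀ U, Φ (cls (ind U.1)) = cls (ind (f U).1) := by
  let e := Equiv.ofBijective _ (indClass_bijective (k := k) (V := V))
  let f := e.trans ((Φ.toEquiv.subtypeEquiv (isIndecomposable_apply_iff hΦ)).trans e.symm)
  have hf (U) : Φ (cls (ind U.1)) = cls (ind (f U).1) :=
    congrArg Subtype.val (e.apply_symm_apply
      (Φ.toEquiv.subtypeEquiv (isIndecomposable_apply_iff hΦ) (e U))).symm
  refine ⟨f, fun U W ↦ ?_, hf⟩
  rw [← Subtype.coe_le_coe, ← Subtype.coe_le_coe, ← Subtype.coe_le_coe, ← Subtype.coe_le_coe,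
    ← monovary_ind_iff, ← monovary_ind_iff, ← (isNorm_ind _).add_iff (isNorm_ind _),
    ← (isNorm_ind _).add_iff (isNorm_ind _), ← isNormClass_cls, ← isNormClass_cls, map_add,
    map_add, ← hf, ← hf, ← map_add, hΦ]

-- `δ` compares the point sums over a hyperplane containing the line `l` and over a complement of
-- `l`. A subspace that is not a line meets both hyperplanes, so `δ` kills its indicator.
lemma exists_addMonoidHom_cls_ind_eq_one [Finite k] [Module.Finite k V] (l : Submodule k V)
    (hl : IsAtom l) (hl' : l ≠ ⊤) :
    ∃ δ : ModConst (ℙ k V) →+ ZMod (Nat.card k), δ (cls (ind l)) = 1 ∧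
      ∀ U : Submodule k V, U ≠ ⊥ → ¬ IsAtom U → δ (cls (ind U)) = 0 := by
  obtain ⟨H, hH, hlH⟩ := (eq_top_or_exists_le_coatom l).resolve_left hl'
  obtain ⟨H', hlH'⟩ := exists_isCompl l
  have hH' : IsCoatom H' := hlH'.isAtom_iff_isCoatom.mp hl
  have hmeet {U L : Submodule k V} (hL : IsCoatom L) (hU : U ≠ ⊥) (hUa : ¬ IsAtom U) :
      U ⊓ L ≠ ⊥ := fun h ↦ by
    have hUL : ¬ U ≤ L := fun hle ↦ hU (by rwa [inf_of_le_left hle] at h)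
    have hcompl : IsCompl U L :=
      ⟨disjoint_iff.mpr h, codisjoint_iff.mpr (hL.2 _ (right_lt_sup.mpr hUL))⟩
    exact hUa (hcompl.isAtom_iff_isCoatom.mpr hL)
  have hH0 : H ≠ ⊥ := by rintro rfl; exact hl.1 (le_bot_iff.mp hlH)
  have hH'0 : H' ≠ ⊥ := by rintro rfl; exact hl' (eq_top_of_isCompl_bot hlH')
  let δ : ModConst (ℙ k V) →+ ZMod (Nat.card k) := QuotientAddGroup.lift _
    (pointSum H - pointSum H') <| by
      rw [AddSubgroup.zmultiples_le, AddMonoidHom.mem_ker]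
      have hone : (1 : ℙ k V → ℤ) = ind ⊤ := by ext p; simp [ind_of_le]
      rw [hone, AddMonoidHom.sub_apply, pointSum_ind (by simpa), pointSum_ind (by simpa), sub_self]
  have hδ (U) : δ (cls (ind U)) = pointSum H (ind U) - pointSum H' (ind U) := rfl
  refine ⟨δ, ?_, fun U hU hUa ↦ ?_⟩
  · rw [hδ, pointSum_ind (by rw [inf_of_le_left hlH]; exact hl.1),
      pointSum_ind_of_disjoint hlH'.disjoint, sub_zero]
  · rw [hδ, pointSum_ind (hmeet hH hU hUa), pointSum_ind (hmeet hH' hU hUa), sub_self]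

lemma exists_isAtom_apply [Finite k] [Module.Finite k V] [Nontrivial (ℙ k V)]
    {f : Set.Ioo (⊥ : Submodule k V) ⊤ → Set.Ioo (⊥ : Submodule k V) ⊤}
    (hf : ∀ U, Φ (cls (ind U.1)) = cls (ind (f U).1)) :
    ∃ l, IsAtom l.1 ∧ IsAtom (f l).1 := by
  classical
  by_contra! h
  obtain ⟨p⟩ := (inferInstance : Nonempty (ℙ k V))
  obtain ⟨δ, hδp, hδ⟩ :=
    exists_addMonoidHom_cls_ind_eq_one p.submodule (isAtom_submodule p) (submodule_mem_Ioo p).2.ne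
  have hδΦ : δ.comp Φ.toAddMonoidHom = 0 := by
    ext q
    have := hδ _ (f ⟨_, submodule_mem_Ioo q⟩).2.1.ne'
      (h ⟨_, submodule_mem_Ioo q⟩ (isAtom_submodule q))
    rw [← hf] at this
    simpa [ind_submodule] using this
  have hone : (0 : ZMod (Nat.card k)) = 1 := by
    rw [← hδp, ← Φ.apply_symm_apply (cls (ind p.submodule))]
    exact (DFunLike.congr_fun hδΦ _).symm
  have : Fact (1 < Nat.card k) := ⟨Finite.one_lt_card⟩
  exact zero_ne_one hone

lemma exists_perm_apply_single [Finite k] [Module.Finite k V] [DecidableEq (ℙ k V)]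
    (hΦ : ∀ x, IsNormClass (Φ x) ↔ IsNormClass x) :
    ∃ σ : Equiv.Perm (ℙ k V), ∀ p, Φ (cls (Pi.single p 1)) = cls (Pi.single (σ p) 1) := by
  rcases subsingleton_or_nontrivial (ℙ k V) with _ | _
  · have hsub (q : ℙ k V) : cls (Pi.single (M := fun _ ↦ ℤ) q 1) = 0 := cls_eq_zero_iff.mpr
      ⟨1, fun r ↦ by rw [Subsingleton.elim r q, Pi.single_eq_same]⟩
    exact ⟨1, fun p ↦ by simp only [hsub, map_zero]⟩
  obtain ⟨f, hfcomp, hf⟩ := exists_preservesComparability hΦ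
  obtain ⟨l, hl, hfl⟩ := exists_isAtom_apply hf
  let line (p : ℙ k V) : {U : Set.Ioo (⊥ : Submodule k V) ⊤ // IsAtom U.1} :=
    ⟨⟨p.submodule, submodule_mem_Ioo p⟩, isAtom_submodule p⟩
  have hline : Function.Bijective line := by
    refine ⟨fun p q h ↦ Projectivization.submodule_injective (congrArg (·.1.1) h), fun U ↦ ?_⟩
    obtain ⟨p, hp⟩ := exists_submodule_eq_of_isAtom U.2
    exact ⟨p, Subtype.ext (Subtype.ext hp)⟩
  let e := Equiv.ofBijective line hline
  let g : Equiv.Perm {U : Set.Ioo (⊥ : Submodule k V) ⊤ // IsAtom U.1} :=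
    f.subtypeEquiv fun _ ↦ (hfcomp.isAtom_apply_iff hl hfl).symm
  refine ⟨e.trans (g.trans e.symm), fun p ↦ ?_⟩
  have hp : (e.symm (g (e p))).submodule = (f (line p).1).1 :=
    congrArg (·.1.1) (e.apply_symm_apply (g (e p)))
  rw [← ind_submodule, ← ind_submodule]
  exact (hf (line p).1).trans (by rw [← hp]; rfl)

end NormClassAutomorphisms

section WeightValuation

lemma isHomogeneous_sumSMulX {σ R : Type*} [CommRing R] (c : σ →₀ R) :
    (sumSMulX c).IsHomogeneous 1 := by
  rw [sumSMulX, Finsupp.linearCombination_apply]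
  refine IsHomogeneous.sum _ _ _ fun i _ ↦ ?_
  simpa only [smul_eq_C_mul] using isHomogeneous_C_mul_X (c i) i

lemma support_sumSMulX {σ R : Type*} [CommRing R] (c : σ →₀ R) :
    ((sumSMulX c).support : Set (σ →₀ ℕ)) = (Finsupp.single · 1) '' c.support := by
  refine Set.Subset.antisymm (fun m hm ↦ ?_) (Set.image_subset_iff.mpr fun i hi ↦ ?_)
  · have hdeg : m.degree = 1 :=
      (DFunLike.congr_fun Finsupp.degree_eq_weight_one m).trans
        (isHomogeneous_sumSMulX c (mem_support_iff.mp hm))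
    obtain ⟨i, rfl⟩ := (Finsupp.range_single_one).ge hdeg
    exact ⟨i, by simpa [coeff_sumSMulX] using hm, rfl⟩
  · simpa [coeff_sumSMulX] using hi

variable {σ R Γ : Type*} [CommRing R] [AddCommGroup Γ] [LinearOrder Γ] [IsOrderedAddMonoid Γ]

/-- The ring map sending `X i` to `X i * T ^ a i`, where `T` is the variable of the Hahn series:
it records the `a`-weighted grading of polynomials. -/
noncomputable def weightExpansion (a : σ → Γ) :
    MvPolynomial σ R →+* HahnSeries Γ (MvPolynomial σ R) :=
  eval₂Hom (HahnSeries.C.comp MvPolynomial.C) fun i ↦ .single (a i) (X i)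

lemma weightExpansion_monomial (a : σ → Γ) (m : σ →₀ ℕ) (c : R) :
    weightExpansion a (monomial m c) = .single (Finsupp.weight a m) (monomial m c) := by
  have hone : weightExpansion a (monomial m (1 : R)) =
      .single (Finsupp.weight a m) (monomial m 1) := by
    induction m using Finsupp.induction_linear with
    | zero => simp
    | add m n hm hn =>
      rw [← one_mul (1 : R), ← monomial_mul, map_mul, hm, hn, HahnSeries.single_mul_single,
        map_add]
    | single i n =>
      simp [weightExpansion, ← X_pow_eq_monomial, HahnSeries.single_pow, Finsupp.weight_single]
  rw [← mul_one c, ← C_mul_monomial, map_mul, hone]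
  simp [weightExpansion, HahnSeries.C_apply]

lemma coeff_coeff_weightExpansion (a : σ → Γ) (m : σ →₀ ℕ) (s : MvPolynomial σ R) :
    coeff m ((weightExpansion a s).coeff (Finsupp.weight a m)) = coeff m s := by
  classical
  induction s using MvPolynomial.induction_on' with
  | monomial n c =>
    rw [weightExpansion_monomial, HahnSeries.coeff_single]
    aesop
  | add p q hp hq => rw [map_add, HahnSeries.coeff_add, coeff_add, hp, hq, coeff_add]

lemma weightExpansion_injective (a : σ → Γ) :
    Function.Injective (weightExpansion (R := R) a) := by
  refine (injective_iff_map_eq_zero _).mpr fun s hs ↦ MvPolynomial.ext _ _ fun m ↦ ?_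
  rw [← coeff_coeff_weightExpansion a, hs, HahnSeries.coeff_zero]

variable [IsDomain R]

/-- The monomial valuation for which `X i` has weight `a i`. -/
noncomputable def weightValuation (a : σ → Γ) : AddValuation (MvPolynomial σ R) (WithTop Γ) :=
  (HahnSeries.addVal Γ (MvPolynomial σ R)).comap (weightExpansion a)

lemma weightValuation_apply (a : σ → Γ) (s : MvPolynomial σ R) :
    weightValuation a s = (weightExpansion a s).orderTop :=
  HahnSeries.addVal_apply

lemma weightValuation_ne_top (a : σ → Γ) {s : MvPolynomial σ R} (hs : s ≠ 0) :
    weightValuation a s ≠ ⊤ := by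
  rw [weightValuation_apply, HahnSeries.orderTop_ne_top]
  exact (map_ne_zero_iff _ (weightExpansion_injective a)).mpr hs

lemma weightValuation_le_weight (a : σ → Γ) {m : σ →₀ ℕ} {s : MvPolynomial σ R}
    (hm : coeff m s ≠ 0) : weightValuation a s ≤ Finsupp.weight a m := by
  refine HahnSeries.addVal_le_of_coeff_ne_zero fun h ↦ hm ?_
  rw [← coeff_coeff_weightExpansion a, h, coeff_zero]

lemma weightValuation_eq_of_isLeast {a : σ → Γ} {s : MvPolynomial σ R} {n : Γ}
    (hn : IsLeast (Finsupp.weight a '' (s.support : Set (σ →₀ ℕ))) n) :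
    weightValuation a s = n := by
  apply le_antisymm
  · obtain ⟨m, hm, rfl⟩ := hn.1
    exact weightValuation_le_weight a (mem_support_iff.mp hm)
  · rw [s.as_sum]
    refine AddValuation.map_le_sum _ fun m hm ↦ ?_
    rw [weightValuation_apply, weightExpansion_monomial,
      HahnSeries.orderTop_single (monomial_eq_zero.not.mpr (mem_support_iff.mp hm))]
    exact WithTop.coe_le_coe.mpr (hn.2 (Set.mem_image_of_mem _ hm))

lemma weightValuation_sumSMulX {a : σ → Γ} {c : σ →₀ R} {n : Γ}
    (hn : IsLeast (a '' (c.support : Set σ)) n) : weightValuation a (sumSMulX c) = n := by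
  refine weightValuation_eq_of_isLeast ?_
  simpa only [support_sumSMulX, Set.image_image, Finsupp.weight_single, one_smul] using hn

end WeightValuation

section Extension

variable {R S K Γ : Type*} [CommRing R] [IsDomain R] [CommRing S] [CommRing K] [Algebra R K]
  [IsFractionRing R K] [LinearOrderedAddCommGroupWithTop Γ]

lemma exists_addValuation_algebraMap {f : R →+* S} (hf : Function.Injective f)
    {v : AddValuation S Γ} (hv : ∀ s ≠ 0, v s ≠ ⊤) :
    ∃ w : AddValuation K Γ, ∀ r, w (algebraMap R K r) = v (f r) := by
  have hR : nonZeroDivisors R ≤ (v.comap f).toValuation.supp.primeCompl := fun r hr ↦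
    hv (f r) ((map_ne_zero_iff f hf).mpr (nonZeroDivisors.ne_zero hr))
  exact ⟨.ofValuation ((v.comap f).toValuation.extendToLocalization hR K),
    fun r ↦ (v.comap f).toValuation.extendToLocalization_apply_map_apply hR K r⟩

end Extension

section AdaptedBasis

variable {k V ι : Type*} [Field k] [AddCommGroup V] [Module k V] {α : ℙ k V → ℤ}

lemma exists_basis_eq_update [DecidableEq ι] [FiniteDimensional k V] (b : Basis ι k V) {v : V}
    {j : ι} (hj : b.repr v j ≠ 0) : ∃ b' : Basis ι k V, ⇑b' = Function.update b j v := by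
  have := FiniteDimensional.fintypeBasisIndex b
  have hli := b.linearIndependent.update j v
    ⟨1, one_mem _, b.repr v, mem_nonZeroDivisors_of_ne_zero hj, by simp⟩
  have : Nonempty ι := ⟨j⟩
  exact ⟨basisOfLinearIndependentOfCardEqFinrank hli (finrank_eq_card_basis b).symm, by simp⟩

lemma IsNorm.le_apply_mk_of_repr (hα : IsNorm α) (b : Basis ι k V) {n : ℤ} {v : V} (hv : v ≠ 0)
    (hn : ∀ i ∈ (b.repr v).support, n ≤ α (.mk k (b i) (b.ne_zero i))) : n ≤ α (.mk k v hv) := by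
  obtain ⟨U, hU⟩ := hα.exists_superlevel n
  simp only [hU, Projectivization.submodule_mk, Submodule.span_singleton_le_iff_mem] at hn ⊢
  rw [← b.linearCombination_repr v]
  exact Submodule.sum_mem _ fun i hi ↦ U.smul_mem _ (hn i hi)

-- The basis maximises the sum of the values of the norm: otherwise some basis vector could be
-- exchanged for a vector of larger value.
lemma IsNorm.exists_basis_isLeast [Finite V] (hα : IsNorm α) (b₀ : Basis ι k V) :
    ∃ b : Basis ι k V, ∀ v (hv : v ≠ 0),
      IsLeast ((fun i ↦ α (.mk k (b i) (b.ne_zero i))) '' (b.repr v).support) (α (.mk k v hv)) := by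
  classical
  have := FiniteDimensional.fintypeBasisIndex b₀
  have : Finite (Basis ι k V) := .of_injective _ DFunLike.coe_injective
  have : Nonempty (Basis ι k V) := ⟨b₀⟩
  obtain ⟨b, hb⟩ := Finite.exists_max fun b : Basis ι k V ↦ ∑ i, α (.mk k (b i) (b.ne_zero i))
  refine ⟨b, fun v hv ↦ ?_⟩
  obtain ⟨j, hj, hmin⟩ := (b.repr v).support.exists_min_image
    (fun i ↦ α (.mk k (b i) (b.ne_zero i))) (by simpa using hv)
  have hle : α (.mk k v hv) ≤ α (.mk k (b j) (b.ne_zero j)) := by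
    obtain ⟨b', hb'⟩ := exists_basis_eq_update b (Finsupp.mem_support_iff.mp hj)
    by_contra! hlt
    refine (hb b').not_gt (Finset.sum_lt_sum (fun i _ ↦ ?_) ⟨j, Finset.mem_univ j, ?_⟩)
    · by_cases hi : i = j
      · subst hi
        simpa [hb'] using hlt.le
      · simp [hb', hi]
    · simpa [hb'] using hlt
  have heq := hle.antisymm (hα.le_apply_mk_of_repr b hv hmin)
  exact heq ▸ ⟨Set.mem_image_of_mem _ hj, Set.forall_mem_image.mpr hmin⟩

end AdaptedBasis

lemma aeval_mul_of_isHomogeneous {σ R S : Type*} [CommSemiring R] [CommSemiring S] [Algebra R S]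
    {s : MvPolynomial σ R} {d : ℕ} (hs : s.IsHomogeneous d) (x : σ → S) (c : S) :
    aeval (fun i ↦ x i * c) s = aeval x s * c ^ d := by
  simp only [aeval_def, eval₂_eq, Finset.sum_mul]
  refine Finset.sum_congr rfl fun m hm ↦ ?_
  rw [hs.degree_eq_sum_deg_support hm, ← Finset.prod_pow_eq_pow_sum, mul_assoc]
  simp only [mul_pow, Finset.prod_mul_distrib]

section LinearSubstitution

variable {ι κ R : Type*} [CommRing R]

/-- The action of a linear map on polynomials by substitution of linear forms, that is, the
functoriality of the symmetric algebra. -/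
noncomputable def linSubst (g : (ι →₀ R) →ₗ[R] (κ →₀ R)) :
    MvPolynomial ι R →ₐ[R] MvPolynomial κ R :=
  aeval fun i ↦ sumSMulX (g (.single i 1))

lemma linSubst_id : linSubst (.id : (ι →₀ R) →ₗ[R] _) = .id R _ := by
  ext i : 1
  simp [linSubst, sumSMulX]

lemma isHomogeneous_linSubst (g : (ι →₀ R) →ₗ[R] (κ →₀ R)) {s : MvPolynomial ι R} {d : ℕ}
    (hs : s.IsHomogeneous d) : (linSubst g s).IsHomogeneous d := by
  have := hs.aeval (fun i ↦ sumSMulX (g (.single i 1))) fun i ↦ isHomogeneous_sumSMulX _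
  rwa [one_mul] at this

lemma linSubst_sumSMulX (g : (ι →₀ R) →ₗ[R] (κ →₀ R)) (v : ι →₀ R) :
    linSubst g (sumSMulX v) = sumSMulX (g v) := by
  suffices (linSubst g).toLinearMap ∘ₗ sumSMulX = sumSMulX ∘ₗ g from LinearMap.congr_fun this v
  ext i : 2
  simp [linSubst, sumSMulX]

lemma linSubst_linSubst_symm (g : (ι →₀ R) ≃ₗ[R] (κ →₀ R)) (s : MvPolynomial κ R) :
    linSubst g.toLinearMap (linSubst g.symm.toLinearMap s) = s := by
  suffices (linSubst g.toLinearMap).comp (linSubst g.symm.toLinearMap) = .id R _ from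
    DFunLike.congr_fun this s
  ext i : 1
  simp only [AlgHom.comp_apply, linSubst, aeval_X]
  rw [← linSubst, linSubst_sumSMulX]
  simp [sumSMulX]

lemma linSubst_injective (g : (ι →₀ R) ≃ₗ[R] (κ →₀ R)) :
    Function.Injective (linSubst g.toLinearMap) :=
  Function.LeftInverse.injective (linSubst_linSubst_symm g.symm)

end LinearSubstitution

lemma IsNorm.exists_addValuation {σ k K : Type*} [Finite σ] [Field k] [Finite k] [CommRing K]
    [Algebra (MvPolynomial σ k) K] [IsFractionRing (MvPolynomial σ k) K]
    {α : ℙ k (σ →₀ k) → ℤ} (hα : IsNorm α) :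
    ∃ w : AddValuation K (WithTop ℤ), ∀ v (hv : v ≠ 0),
      w (algebraMap (MvPolynomial σ k) K (sumSMulX v)) = α (.mk k v hv) := by
  have : Finite (σ →₀ k) := Module.finite_of_finite k
  obtain ⟨b, hb⟩ := hα.exists_basis_isLeast Finsupp.basisSingleOne
  obtain ⟨w, hw⟩ := exists_addValuation_algebraMap (K := K)
    (f := (linSubst b.repr.toLinearMap).toRingHom) (linSubst_injective b.repr)
    (fun _ ↦ weightValuation_ne_top fun i ↦ α (.mk k (b i) (b.ne_zero i)))
  refine ⟨w, fun v hv ↦ (hw _).trans ?_⟩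
  rw [AlgHom.toRingHom_eq_coe, RingHom.coe_coe, linSubst_sumSMulX]
  exact weightValuation_sumSMulX (hb v hv)

instance finite_finsupp {α M : Type*} [Zero M] [Finite α] [Finite M] : Finite (α →₀ M) :=
  DFunLike.finite _

section LinearForms

variable {σ k : Type*} [Field k]

lemma sumSMulX_injective : Function.Injective (sumSMulX : (σ →₀ k) →ₗ[k] MvPolynomial σ k) :=
  fun v w h ↦ Finsupp.ext fun i ↦ by rw [← coeff_sumSMulX v, h, coeff_sumSMulX]

lemma prime_sumSMulX {v : σ →₀ k} (hv : v ≠ 0) : Prime (sumSMulX v) := by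
  obtain ⟨i, hi⟩ := Finsupp.support_nonempty_iff.mpr hv
  exact (irreducible_sumSMulX _ ⟨i, hi⟩ fun r hr ↦
    isUnit_of_dvd_unit (hr i) (Finsupp.mem_support_iff.mp hi).isUnit).prime

variable (σ k) in
/-- The product of all nonzero linear forms over `k`, an equation of the union of all `k`-rational
hyperplanes. -/
noncomputable def formProd : MvPolynomial σ k :=
  ∏ᶠ v : {v : σ →₀ k // v ≠ 0}, sumSMulX v.1

variable (σ k) in
/-- The degree of `formProd σ k`. -/
noncomputable def numForms : ℕ :=
  Nat.card {v : σ →₀ k // v ≠ 0}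

lemma linSubst_formProd (g : (σ →₀ k) ≃ₗ[k] (σ →₀ k)) [Finite (σ →₀ k)] :
    linSubst g.toLinearMap (formProd σ k) = formProd σ k := by
  rw [formProd, map_finprod _ (Set.toFinite _)]
  simp only [linSubst_sumSMulX]
  exact finprod_comp_equiv
    (g.toEquiv.subtypeEquiv (p := (· ≠ 0)) (q := (· ≠ 0)) fun v ↦ by simp)
    (f := fun v ↦ sumSMulX v.1)

variable [Finite (σ →₀ k)]

lemma isHomogeneous_formProd : (formProd σ k).IsHomogeneous (numForms σ k) := by
  have := Fintype.ofFinite {v : σ →₀ k // v ≠ 0}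
  rw [formProd, numForms, finprod_eq_prod_of_fintype, Nat.card_eq_fintype_card]
  simpa using IsHomogeneous.prod Finset.univ (fun v : {v : σ →₀ k // v ≠ 0} ↦ sumSMulX v.1)
    (fun _ ↦ 1) fun v _ ↦ isHomogeneous_sumSMulX v.1

lemma formProd_mem_iff {P : Ideal (MvPolynomial σ k)} [hP : P.IsPrime] :
    formProd σ k ∈ P ↔ ∃ v ≠ 0, sumSMulX v ∈ P := by
  have := Fintype.ofFinite {v : σ →₀ k // v ≠ 0}
  rw [formProd, finprod_eq_prod_of_fintype, hP.prod_mem_iff]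
  simp

lemma prime_dvd_formProd_iff {q : MvPolynomial σ k} (hq : Prime q) :
    q ∣ formProd σ k ↔ ∃ v ≠ 0, q ∣ sumSMulX v := by
  have := (Ideal.span_singleton_prime hq.ne_zero).mpr hq
  simpa only [Ideal.mem_span_singleton] using formProd_mem_iff (P := .span {q})

lemma formProd_ne_zero : formProd σ k ≠ 0 := fun h ↦ by
  have := Ideal.isPrime_bot (α := MvPolynomial σ k)
  obtain ⟨v, hv, hv0⟩ := (formProd_mem_iff (P := ⊥)).mp h
  exact (prime_sumSMulX hv).ne_zero hv0

lemma exists_isHomogeneous_formProd_eq_mul {v : σ →₀ k} (hv : v ≠ 0) :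
    ∃ G d, G.IsHomogeneous d ∧ 1 + d = numForms σ k ∧ formProd σ k = sumSMulX v * G := by
  classical
  have := Fintype.ofFinite {v : σ →₀ k // v ≠ 0}
  have hF := Fintype.prod_eq_mul_prod_compl (⟨v, hv⟩ : {v : σ →₀ k // v ≠ 0}) (sumSMulX ·.1)
  rw [← finprod_eq_prod_of_fintype, ← formProd] at hF
  have hG := IsHomogeneous.prod ({⟨v, hv⟩}ᶜ : Finset {v : σ →₀ k // v ≠ 0}) (sumSMulX ·.1)
    (fun _ ↦ 1) fun w _ ↦ isHomogeneous_sumSMulX w.1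
  exact ⟨_, _, hG, ((isHomogeneous_sumSMulX v).mul hG).inj_right (hF ▸ isHomogeneous_formProd)
    (hF ▸ formProd_ne_zero), hF⟩

end LinearForms

section RationalForms

variable {σ k K : Type*} [Field k] [Field K] [Algebra (MvPolynomial σ k) K]
  [IsFractionRing (MvPolynomial σ k) K]

variable (K) in
/-- The linear form spanning the line `p`, as a nonzero rational function; it is well defined up to
a constant, and `Projectivization.rep` makes the choice. -/
noncomputable def formUnit (p : ℙ k (σ →₀ k)) : Kˣ :=
  .mk0 (algebraMap (MvPolynomial σ k) K (sumSMulX p.rep)) <|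
    (map_ne_zero_iff _ (IsFractionRing.injective _ K)).mpr (prime_sumSMulX p.rep_nonzero).ne_zero

lemma coe_formUnit (p : ℙ k (σ →₀ k)) :
    (formUnit K p : K) = algebraMap (MvPolynomial σ k) K (sumSMulX p.rep) :=
  rfl

variable [Algebra k K] [IsScalarTower k (MvPolynomial σ k) K]

lemma exists_sumSMulX_eq_formUnit {v : σ →₀ k} (hv : v ≠ 0) :
    ∃ c : kˣ, algebraMap (MvPolynomial σ k) K (sumSMulX v) =
      algebraMap k K c * formUnit K (.mk k v hv) := by
  obtain ⟨c, hc⟩ := Projectivization.exists_smul_eq_mk_rep k v hv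
  refine ⟨c⁻¹, ?_⟩
  rw [coe_formUnit, ← hc, Units.smul_def, map_smul, Algebra.smul_def, map_mul,
    ← IsScalarTower.algebraMap_apply k _ K, ← mul_assoc, ← map_mul, Units.inv_mul, map_one,
    one_mul]

end RationalForms

section Divisors

lemma exists_mem_of_dvd_pow {S M : Type*} [CommMonoidWithZero S] [NoZeroDivisors S]
    [UniqueFactorizationMonoid S] [Monoid M] {f : S →* M} {H : Subgroup Mˣ} {F s : S} {m : ℕ}
    (hunit : ∀ s, IsUnit s → ∃ x ∈ H, x = f s) (hF : F ≠ 0)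
    (hprime : ∀ q, Prime q → q ∣ F → ∃ x ∈ H, x = f q) (hs : s ∣ F ^ m) :
    ∃ x ∈ H, x = f s := by
  induction s using UniqueFactorizationMonoid.induction_on_prime with
  | h₁ => exact absurd (zero_dvd_iff.mp hs) (pow_ne_zero m hF)
  | h₂ s hsu => exact hunit s hsu
  | h₃ s q _ hq ih =>
    obtain ⟨x, hx, hxs⟩ := ih ((dvd_mul_left s q).trans hs)
    obtain ⟨y, hy, hyq⟩ := hprime q hq (hq.dvd_of_dvd_pow ((dvd_mul_right q s).trans hs))
    exact ⟨y * x, mul_mem hy hx, by rw [Units.val_mul, hxs, hyq, map_mul]⟩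

variable {σ k K : Type*} [Field k] [Field K] [Algebra (MvPolynomial σ k) K]
  [IsFractionRing (MvPolynomial σ k) K] [Algebra k K] [IsScalarTower k (MvPolynomial σ k) K]
  [Finite (σ →₀ k)]

lemma exists_eq_prod_formUnit_of_dvd [Fintype (ℙ k (σ →₀ k))] {s : MvPolynomial σ k} {m : ℕ}
    (hs : s ∣ formProd σ k ^ m) :
    ∃ (c : kˣ) (e : ℙ k (σ →₀ k) → ℤ), algebraMap (MvPolynomial σ k) K s =
      algebraMap k K c * (∏ p, formUnit K p ^ e p : Kˣ) := by
  let H := (Units.map (algebraMap k K : k →* K)).range ⊔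
    Subgroup.closure (Set.range (formUnit (σ := σ) (k := k) K))
  have hC (c : kˣ) : ∃ x ∈ H, (x : K) = algebraMap k K c :=
    ⟨_, Subgroup.mem_sup_left ⟨c, rfl⟩, rfl⟩
  have hunit (s) (hs : IsUnit s) : ∃ x ∈ H, (x : K) = algebraMap (MvPolynomial σ k) K s := by
    obtain ⟨c, hc, rfl⟩ := isUnit_iff_eq_C_of_isReduced.mp hs
    obtain ⟨x, hx, hxc⟩ := hC hc.unit
    exact ⟨x, hx, hxc.trans (IsScalarTower.algebraMap_apply k (MvPolynomial σ k) K c)⟩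
  have hprime (q) (hq : Prime q) (hqF : q ∣ formProd σ k) :
      ∃ x ∈ H, (x : K) = algebraMap (MvPolynomial σ k) K q := by
    obtain ⟨v, hv, hqv⟩ := (prime_dvd_formProd_iff hq).mp hqF
    obtain ⟨u, rfl⟩ := (hq.associated_of_dvd (prime_sumSMulX hv) hqv).symm
    obtain ⟨c, hc⟩ := exists_sumSMulX_eq_formUnit (K := K) hv
    obtain ⟨x, hx, hxu⟩ := hunit u u.isUnit
    obtain ⟨y, hy, hyc⟩ := hC c
    refine ⟨y * formUnit K (.mk k v hv) * x, mul_mem (mul_mem hy ?_) hx, ?_⟩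
    · exact Subgroup.mem_sup_right (Subgroup.subset_closure ⟨_, rfl⟩)
    · rw [Units.val_mul, Units.val_mul, hxu, hyc, map_mul, hc]
  obtain ⟨x, hx, hxs⟩ := exists_mem_of_dvd_pow (f := (algebraMap (MvPolynomial σ k) K : _ →* K))
    hunit formProd_ne_zero hprime hs
  obtain ⟨_, ⟨c, rfl⟩, y, hy, rfl⟩ := Subgroup.mem_sup.mp hx
  obtain ⟨e, rfl⟩ := Subgroup.exists_of_mem_closure_range _ _ hy
  exact ⟨c, e, hxs.symm⟩

end Divisors

section UnitHoms

/-- A homomorphism from the units of a ring to `ℤ` is ultrametric if it satisfies the inequality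
`min (f x) (f y) ≤ f (x + y)` of a valuation whenever it makes sense. -/
def IsUltrametric {R : Type*} [Ring R] (f : Additive Rˣ →+ ℤ) : Prop :=
  ∀ ⦃x y z : Rˣ⦄, (x + y : R) = z → min (f (.ofMul x)) (f (.ofMul y)) ≤ f (.ofMul z)

lemma IsUltrametric.comp_unitsMap {R S F : Type*} [Ring R] [Ring S] [FunLike F R S]
    [RingHomClass F R S] {f : Additive Sˣ →+ ℤ} (hf : IsUltrametric f) (φ : F) :
    IsUltrametric (f.comp (Units.map (φ : R →* S)).toAdditive) :=
  fun x y z h ↦ hf (by simpa using congr(φ $h))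

/-- The restriction to the unit group of a valuation with values in `ℤ`. -/
def valuationHom {K : Type*} [DivisionRing K] (w : AddValuation K (WithTop ℤ)) :
    Additive Kˣ →+ ℤ where
  toFun u := (w (u.toMul : K)).untop (w.ne_top_iff.mpr u.toMul.ne_zero)
  map_zero' := by simp
  map_add' u v := WithTop.coe_injective (by simp)

lemma coe_valuationHom {K : Type*} [DivisionRing K] (w : AddValuation K (WithTop ℤ)) (u : Kˣ) :
    (valuationHom w (.ofMul u) : WithTop ℤ) = w u :=
  WithTop.coe_untop _ _

lemma isUltrametric_valuationHom {K : Type*} [DivisionRing K] (w : AddValuation K (WithTop ℤ)) :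
    IsUltrametric (valuationHom w) := fun x y z h ↦ by
  rw [← WithTop.coe_le_coe, WithTop.coe_min, coe_valuationHom, coe_valuationHom, coe_valuationHom,
    ← h]
  exact w.map_add x y

lemma addMonoidHom_algebraMap_eq_zero {k R : Type*} [Field k] [Finite k] [Ring R] [Algebra k R]
    (f : Additive Rˣ →+ ℤ) (c : kˣ) :
    f (.ofMul (Units.map (algebraMap k R : k →* R) c)) = 0 := by
  let g := f.comp (Units.map (algebraMap k R : k →* R)).toAdditive
  exact IsOfFinAddOrder.eq_zero' (g.isOfFinAddOrder (isOfFinAddOrder_of_finite (Additive.ofMul c)))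

variable {σ k K : Type*} [Field k] [Field K] [Algebra (MvPolynomial σ k) K]
  [IsFractionRing (MvPolynomial σ k) K]

variable (K) in
lemma exists_degreeHom : ∃ deg : Additive Kˣ →+ ℤ, ∀ (u : Kˣ) (s : MvPolynomial σ k) (d : ℕ),
    s.IsHomogeneous d → u = algebraMap (MvPolynomial σ k) K s → deg (.ofMul u) = d := by
  obtain ⟨w, hw⟩ := exists_addValuation_algebraMap (K := K) (f := .id (MvPolynomial σ k))
    Function.injective_id (fun _ ↦ weightValuation_ne_top fun _ ↦ (1 : ℤ))
  refine ⟨valuationHom w, fun u s d hs hu ↦ WithTop.coe_injective ?_⟩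
  rw [coe_valuationHom, hu, hw]
  have hs0 : s ≠ 0 := by rintro rfl; exact u.ne_zero (hu.trans (map_zero _))
  have hweight (m) (hm : m ∈ s.support) : Finsupp.weight (fun _ : σ ↦ (1 : ℤ)) m = d := by
    rw [← hs (mem_support_iff.mp hm)]
    simp [Finsupp.weight_apply, Finsupp.sum]
  obtain ⟨m, hm⟩ := support_nonempty.mpr hs0
  exact weightValuation_eq_of_isLeast
    ⟨⟨m, hm, hweight m hm⟩, by rintro _ ⟨n, hn, rfl⟩; exact (hweight n hn).ge⟩

variable [Finite σ] [Finite k]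

variable (K) in
lemma IsNorm.exists_isUltrametric {α : ℙ k (σ →₀ k) → ℤ} (hα : IsNorm α) :
    ∃ f : Additive Kˣ →+ ℤ, IsUltrametric f ∧ ∀ p, f (.ofMul (formUnit K p)) = α p := by
  obtain ⟨w, hw⟩ := hα.exists_addValuation (K := K)
  refine ⟨valuationHom w, isUltrametric_valuationHom w, fun p ↦ WithTop.coe_injective ?_⟩
  rw [coe_valuationHom, coe_formUnit, hw _ p.rep_nonzero, p.mk_rep]

variable (K) in
lemma exists_addMonoidHom_formUnit_eq (α : ℙ k (σ →₀ k) → ℤ) :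
    ∃ f : Additive Kˣ →+ ℤ, ∀ p, f (.ofMul (formUnit K p)) = α p := by
  classical
  have := Fintype.ofFinite (ℙ k (σ →₀ k))
  have hsingle (q : ℙ k (σ →₀ k)) : ∃ f : Additive Kˣ →+ ℤ,
      ∀ p, f (.ofMul (formUnit K p)) = Pi.single (M := fun _ ↦ ℤ) q 1 p := by
    obtain ⟨f, -, hf⟩ := (isNorm_ind q.submodule).exists_isUltrametric K
    exact ⟨f, fun p ↦ (hf p).trans (congrFun (ind_submodule q) p)⟩
  choose f hf using hsingle
  refine ⟨∑ q, α q • f q, fun p ↦ ?_⟩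
  simp [hf, Pi.single_apply]

end UnitHoms

section HalfSpaceRing

variable {σ k K : Type*} [Field k] [Field K] [Algebra (MvPolynomial σ k) K]
  [Algebra k K] [IsScalarTower k (MvPolynomial σ k) K] [Finite (σ →₀ k)]

variable (σ k K) in
/-- The coordinate ring of the Drinfeld half-space inside the field `K` of rational functions: the
fractions `s / F ^ m` of degree `0`, where `F` is the product of all nonzero linear forms. -/
def halfSpaceRing : Subalgebra k K where
  carrier := {x | ∃ (m : ℕ) (s : MvPolynomial σ k), s.IsHomogeneous (m * numForms σ k) ∧
    x * algebraMap _ K (formProd σ k) ^ m = algebraMap _ K s}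
  mul_mem' := by
    rintro x y ⟨m, s, hs, hx⟩ ⟨n, t, ht, hy⟩
    refine ⟨m + n, s * t, by simpa only [add_mul] using hs.mul ht, ?_⟩
    rw [map_mul, ← hx, ← hy]
    ring
  add_mem' := by
    rintro x y ⟨m, s, hs, hx⟩ ⟨n, t, ht, hy⟩
    have hF (j : ℕ) : (formProd σ k ^ j).IsHomogeneous (j * numForms σ k) := by
      simpa only [mul_comm] using isHomogeneous_formProd.pow j
    refine ⟨m + n, s * formProd σ k ^ n + t * formProd σ k ^ m, ?_, ?_⟩
    · rw [add_mul]
      exact (hs.mul (hF n)).add (by simpa only [add_comm] using ht.mul (hF m))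
    · rw [map_add, map_mul, map_mul, ← hx, ← hy, map_pow, map_pow]
      ring
  algebraMap_mem' c := ⟨0, C c, by simpa using isHomogeneous_C σ c, by
    rw [pow_zero, mul_one]
    exact IsScalarTower.algebraMap_apply k (MvPolynomial σ k) K c⟩

lemma mem_halfSpaceRing {x : K} :
    x ∈ halfSpaceRing σ k K ↔ ∃ (m : ℕ) (s : MvPolynomial σ k),
      s.IsHomogeneous (m * numForms σ k) ∧
        x * algebraMap _ K (formProd σ k) ^ m = algebraMap _ K s :=
  Iff.rfl

variable (σ k K) in
lemma unitsMap_val_injective :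
    Function.Injective (Units.map ((halfSpaceRing σ k K).val : halfSpaceRing σ k K →* K)) :=
  Units.map_injective Subtype.val_injective

variable [IsFractionRing (MvPolynomial σ k) K]

lemma sumSMulX_div_formUnit_mem (v : σ →₀ k) (q : ℙ k (σ →₀ k)) :
    algebraMap (MvPolynomial σ k) K (sumSMulX v) / formUnit K q ∈ halfSpaceRing σ k K := by
  obtain ⟨G, d, hG, hd, hF⟩ := exists_isHomogeneous_formProd_eq_mul q.rep_nonzero
  refine ⟨1, sumSMulX v * G, ?_, ?_⟩
  · rw [one_mul, ← hd]
    exact (isHomogeneous_sumSMulX v).mul hG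
  · rw [pow_one, hF, map_mul, map_mul, ← coe_formUnit, ← mul_assoc,
      div_mul_cancel₀ _ (formUnit K q).ne_zero]

variable (K) in
/-- The quotients `v / q` of linear forms `v` by the linear form `formUnit K q`. -/
noncomputable def formFrac (q : ℙ k (σ →₀ k)) : (σ →₀ k) →ₗ[k] halfSpaceRing σ k K where
  toFun v := ⟨_, sumSMulX_div_formUnit_mem v q⟩
  map_add' v w := Subtype.ext <| by simp [add_div]
  map_smul' c v := Subtype.ext <| by
    simp only [map_smul, ← IsScalarTower.coe_toAlgHom' k (MvPolynomial σ k) K, smul_div_assoc,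
      RingHom.id_apply, SetLike.mk_smul_mk]

lemma coe_formFrac (q : ℙ k (σ →₀ k)) (v : σ →₀ k) :
    (formFrac K q v : K) = algebraMap (MvPolynomial σ k) K (sumSMulX v) / formUnit K q :=
  rfl

variable (K) in
/-- The quotient of the linear forms attached to two points, a unit of the coordinate ring. -/
noncomputable def ratio (p q : ℙ k (σ →₀ k)) : (halfSpaceRing σ k K)ˣ where
  val := formFrac K q p.rep
  inv := formFrac K p q.rep
  val_inv := Subtype.ext <| by simp [coe_formFrac, ← coe_formUnit]
  inv_val := Subtype.ext <| by simp [coe_formFrac, ← coe_formUnit]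

lemma coe_ratio (p q : ℙ k (σ →₀ k)) : (ratio K p q : halfSpaceRing σ k K) = formFrac K q p.rep :=
  rfl

lemma unitsMap_ratio (p q : ℙ k (σ →₀ k)) :
    Units.map ((halfSpaceRing σ k K).val : halfSpaceRing σ k K →* K) (ratio K p q) =
      formUnit K p / formUnit K q :=
  Units.ext <| by simp [coe_ratio, coe_formFrac, coe_formUnit]

lemma ratio_mul_ratio (p q r : ℙ k (σ →₀ k)) : ratio K p q * ratio K q r = ratio K p r := by
  refine unitsMap_val_injective σ k K ?_
  rw [map_mul, unitsMap_ratio, unitsMap_ratio, unitsMap_ratio, div_mul_div_cancel]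

lemma exists_eq_prod_formUnit [Fintype (ℙ k (σ →₀ k))] (u : (halfSpaceRing σ k K)ˣ) :
    ∃ (c : kˣ) (e : ℙ k (σ →₀ k) → ℤ),
      Units.map ((halfSpaceRing σ k K).val : halfSpaceRing σ k K →* K) u =
        Units.map (algebraMap k K : k →* K) c * ∏ p, formUnit K p ^ e p := by
  obtain ⟨m, s, -, hus⟩ := mem_halfSpaceRing.mp u.1.2
  obtain ⟨n, t, -, hut⟩ := mem_halfSpaceRing.mp u.2.2
  have hst : s * t = formProd σ k ^ (m + n) := by
    apply IsFractionRing.injective (MvPolynomial σ k) K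
    have huv : (u.1 : K) * (u.2 : K) = 1 := by exact_mod_cast u.val_inv
    rw [map_mul, ← hus, ← hut, mul_mul_mul_comm, huv, one_mul, ← pow_add, map_pow]
  obtain ⟨c, e, hce⟩ := exists_eq_prod_formUnit_of_dvd (K := K) (Dvd.intro t hst)
  obtain ⟨c', e', hce'⟩ := exists_eq_prod_formUnit_of_dvd (K := K) (dvd_refl (formProd σ k ^ m))
  refine ⟨c / c', fun p ↦ e p - e' p, ?_⟩
  simp only [map_div, zpow_sub, ← div_eq_mul_inv, Finset.prod_div_distrib]
  rw [div_mul_div_comm, eq_div_iff_mul_eq']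
  refine Units.ext ?_
  simp only [Units.val_mul, Units.coe_map, MonoidHom.coe_coe, ← hce, ← hce', map_pow]
  exact hus

lemma degreeHom_unitsMap_eq_zero {deg : Additive Kˣ →+ ℤ}
    (hdeg : ∀ (u : Kˣ) (s : MvPolynomial σ k) (d : ℕ),
      s.IsHomogeneous d → u = algebraMap (MvPolynomial σ k) K s → deg (.ofMul u) = d)
    (u : (halfSpaceRing σ k K)ˣ) :
    deg (.ofMul (Units.map ((halfSpaceRing σ k K).val : halfSpaceRing σ k K →* K) u)) = 0 := by
  obtain ⟨m, s, hs, hus⟩ := mem_halfSpaceRing.mp u.1.2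
  have hF0 : algebraMap _ K (formProd σ k) ≠ 0 :=
    (map_ne_zero_iff _ (IsFractionRing.injective _ K)).mpr formProd_ne_zero
  have hF := hdeg (.mk0 _ hF0) _ _ isHomogeneous_formProd rfl
  have hsu := hdeg (Units.map ((halfSpaceRing σ k K).val : halfSpaceRing σ k K →* K) u *
    .mk0 _ hF0 ^ m) s _ hs
    (by simpa using hus)
  simpa [hF] using hsu

lemma exists_eq_prod_ratio [Fintype (ℙ k (σ →₀ k))] (u : (halfSpaceRing σ k K)ˣ)
    (p₀ : ℙ k (σ →₀ k)) :
    ∃ (c : kˣ) (e : ℙ k (σ →₀ k) → ℤ),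
      u = Units.map (algebraMap k (halfSpaceRing σ k K) : k →* halfSpaceRing σ k K) c *
        ∏ p, ratio K p p₀ ^ e p := by
  obtain ⟨c, e, hu⟩ := exists_eq_prod_formUnit u
  obtain ⟨deg, hdeg⟩ := exists_degreeHom (σ := σ) (k := k) K
  have hc : deg (.ofMul (Units.map (algebraMap k K : k →* K) c)) = 0 :=
    hdeg _ (C c) 0 (isHomogeneous_C σ c.1) (IsScalarTower.algebraMap_apply k (MvPolynomial σ k) K c)
  have hp (p : ℙ k (σ →₀ k)) : deg (.ofMul (formUnit K p)) = 1 :=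
    hdeg _ _ 1 (isHomogeneous_sumSMulX p.rep) rfl
  have he : ∑ p, e p = 0 := by
    simpa [hu, hc, hp] using degreeHom_unitsMap_eq_zero hdeg u
  have hp₀ : ∏ p, formUnit K p₀ ^ e p = 1 := by
    refine Additive.ofMul.injective ?_
    simpa [he] using (map_sum (zmultiplesHom _ (Additive.ofMul (formUnit K p₀))) e .univ).symm
  refine ⟨c, e, unitsMap_val_injective σ k K ?_⟩
  simp only [map_mul, map_prod, map_zpow, unitsMap_ratio, div_zpow, Finset.prod_div_distrib, hu,
    hp₀, div_one]
  rfl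

end HalfSpaceRing

section UnitHomClass

variable {σ k K : Type*} [Field k] [Field K] [Algebra (MvPolynomial σ k) K]
  [Algebra k K] [IsScalarTower k (MvPolynomial σ k) K] [Finite (σ →₀ k)]
  [IsFractionRing (MvPolynomial σ k) K]

variable (K) in
/-- The values on the units `ratio K p p₀` of a homomorphism from the unit group of the coordinate
ring to `ℤ`, as a function of `p` up to additive constants; it does not depend on `p₀`. -/
noncomputable def unitHomClass (p₀ : ℙ k (σ →₀ k)) :
    (Additive (halfSpaceRing σ k K)ˣ →+ ℤ) →+ ModConst (ℙ k (σ →₀ k)) where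
  toFun f := cls fun p ↦ f (.ofMul (ratio K p p₀))
  map_zero' := map_zero cls
  map_add' _ _ := map_add cls _ _

variable {f : Additive (halfSpaceRing σ k K)ˣ →+ ℤ} {p₀ : ℙ k (σ →₀ k)}

lemma unitHomClass_eq_cls_iff {α : ℙ k (σ →₀ k) → ℤ} :
    unitHomClass K p₀ f = cls α ↔ ∀ p q, f (.ofMul (ratio K p q)) = α p - α q := by
  refine cls_eq_cls_iff.trans ⟨?_, fun h ↦ ⟨α p₀, fun p ↦ by rw [h, sub_add_cancel]⟩⟩
  rintro ⟨c, hc⟩ p q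
  rw [hc, hc, ← ratio_mul_ratio p q p₀, ofMul_mul, map_add]
  ring

lemma IsUltrametric.isNorm [Finite k] (hf : IsUltrametric f) :
    IsNorm fun p ↦ f (.ofMul (ratio K p p₀)) := by
  intro p q r hr
  obtain ⟨a, b, hab⟩ : ∃ a b : k, a • p.rep + b • q.rep = r.rep := by
    rw [← Submodule.mem_span_pair, Submodule.span_insert, ← Projectivization.submodule_eq,
      ← Projectivization.submodule_eq]
    exact submodule_le_iff.mp hr
  rcases eq_or_ne a 0 with rfl | ha
  · obtain rfl : r = q := eq_of_rep_eq_smul_rep (c := b) (by simpa using hab.symm)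
    exact min_le_right _ _
  rcases eq_or_ne b 0 with rfl | hb
  · obtain rfl : r = p := eq_of_rep_eq_smul_rep (c := a) (by simpa using hab.symm)
    exact min_le_left _ _
  let C (c : kˣ) := Units.map (algebraMap k (halfSpaceRing σ k K) : k →* halfSpaceRing σ k K) c
  have hC (c : kˣ) (p) : f (.ofMul (C c * ratio K p p₀)) = f (.ofMul (ratio K p p₀)) := by
    rw [ofMul_mul, map_add, addMonoidHom_algebraMap_eq_zero, zero_add]
  simp only [← hC (.mk0 a ha) p, ← hC (.mk0 b hb) q]
  apply hf
  simp [C, coe_ratio, ← hab, Algebra.smul_def]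

variable [Finite k]

variable (K p₀) in
lemma unitHomClass_injective : Function.Injective (unitHomClass K p₀) := by
  have := Fintype.ofFinite (ℙ k (σ →₀ k))
  refine (injective_iff_map_eq_zero _).mpr fun f hf ↦ AddMonoidHom.ext fun u ↦ ?_
  have hratio (p) : f (.ofMul (ratio K p p₀)) = 0 := by
    rw [← map_zero cls, unitHomClass_eq_cls_iff] at hf
    exact hf p p₀
  obtain ⟨c, e, hu⟩ := exists_eq_prod_ratio u.toMul p₀
  rw [← ofMul_toMul u, hu, ofMul_mul, map_add, ofMul_prod, map_sum]
  simp [hratio, addMonoidHom_algebraMap_eq_zero]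

variable [Finite σ]

variable (K p₀) in
lemma unitHomClass_surjective : Function.Surjective (unitHomClass K p₀) := by
  intro x
  obtain ⟨α, rfl⟩ := QuotientAddGroup.mk'_surjective _ x
  obtain ⟨f, hf⟩ := exists_addMonoidHom_formUnit_eq K α
  refine ⟨f.comp (Units.map ((halfSpaceRing σ k K).val : halfSpaceRing σ k K →* K)).toAdditive,
    unitHomClass_eq_cls_iff.mpr fun p q ↦ ?_⟩
  simp [unitsMap_ratio, hf]

lemma isNormClass_unitHomClass : IsNormClass (unitHomClass K p₀ f) ↔ IsUltrametric f := by
  refine ⟨?_, fun hf ↦ isNormClass_cls.mpr hf.isNorm⟩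
  rintro ⟨α, hα, hαf⟩
  obtain ⟨g, hg, hgα⟩ := hα.exists_isUltrametric K
  convert hg.comp_unitsMap (halfSpaceRing σ k K).val
  refine unitHomClass_injective K p₀ ?_
  rw [← hαf, eq_comm, unitHomClass_eq_cls_iff]
  intro p q
  simp [unitsMap_ratio, hgα]

end UnitHomClass

section Automorphisms

variable {σ k K : Type*} [Field k] [Field K] [Algebra (MvPolynomial σ k) K]
  [Algebra k K] [IsScalarTower k (MvPolynomial σ k) K] [IsFractionRing (MvPolynomial σ k) K]
  [Finite σ] [Finite k]

section OrdHom

variable (K) in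
/-- `unitHomClass` as an equivalence. -/
noncomputable def unitHomEquiv (p₀ : ℙ k (σ →₀ k)) :
    (Additive (halfSpaceRing σ k K)ˣ →+ ℤ) ≃+ ModConst (ℙ k (σ →₀ k)) :=
  .ofBijective (unitHomClass K p₀) ⟨unitHomClass_injective K p₀, unitHomClass_surjective K p₀⟩

variable [DecidableEq (ℙ k (σ →₀ k))]

variable (K) in
/-- The order of vanishing of the units of the coordinate ring along the hyperplane of `p`, if this
hyperplane is normalised by giving order zero to the hyperplane of `p₀`. -/
noncomputable def ordHom (p₀ p : ℙ k (σ →₀ k)) : Additive (halfSpaceRing σ k K)ˣ →+ ℤ :=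
  (unitHomEquiv K p₀).symm (cls (Pi.single p 1))

lemma ordHom_ratio (p₀ p q r : ℙ k (σ →₀ k)) : ordHom K p₀ p (.ofMul (ratio K q r)) =
    Pi.single (M := fun _ ↦ ℤ) p 1 q - Pi.single (M := fun _ ↦ ℤ) p 1 r :=
  unitHomClass_eq_cls_iff.mp ((unitHomEquiv K p₀).apply_symm_apply _) q r

lemma exists_eq_algebraMap_of_ordHom_eq_zero {p₀ : ℙ k (σ →₀ k)} {u : (halfSpaceRing σ k K)ˣ}
    (hu : ∀ p, ordHom K p₀ p (.ofMul u) = 0) :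
    ∃ c : kˣ, u = Units.map (algebraMap k (halfSpaceRing σ k K) : k →* halfSpaceRing σ k K) c := by
  have := Fintype.ofFinite (ℙ k (σ →₀ k))
  obtain ⟨c, e, rfl⟩ := exists_eq_prod_ratio u p₀
  refine ⟨c, (mul_eq_left.mpr (Finset.prod_eq_one fun p _ ↦ ?_))⟩
  rcases eq_or_ne p p₀ with rfl | hp
  · rw [mul_eq_left.mp (ratio_mul_ratio p p p), one_zpow]
  · have he : e p = 0 := by
      simpa [addMonoidHom_algebraMap_eq_zero, ordHom_ratio, hp.symm, Pi.single_apply] using hu p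
    rw [he, zpow_zero]

lemma exists_perm_ordHom_comp (θ : halfSpaceRing σ k K ≃ₐ[k] halfSpaceRing σ k K)
    (p₀ : ℙ k (σ →₀ k)) :
    ∃ τ : Equiv.Perm (ℙ k (σ →₀ k)), ∀ p (u : (halfSpaceRing σ k K)ˣ),
      ordHom K p₀ (τ p) (.ofMul (Units.mapEquiv θ u)) = ordHom K p₀ p (.ofMul u) := by
  let E := unitHomEquiv (σ := σ) (k := k) K p₀
  let θu := Units.mapEquiv (θ : halfSpaceRing σ k K ≃* halfSpaceRing σ k K)
  let Θ := θu.toAdditive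
  have hΘ (x) : IsNormClass ((E.symm.trans (Θ.addMonoidHomCongrLeft.trans E)) x) ↔
      IsNormClass x := by
    obtain ⟨f, rfl⟩ := E.surjective x
    rw [AddEquiv.trans_apply, E.symm_apply_apply]
    refine isNormClass_unitHomClass.trans (Iff.trans ⟨fun h ↦ ?_, fun h ↦ ?_⟩
      isNormClass_unitHomClass.symm)
    · convert h.comp_unitsMap θ
      ext u
      exact congr(f (.ofMul $(θu.symm_apply_apply u))).symm
    · exact h.comp_unitsMap θ.symm
  obtain ⟨τ, hτ⟩ := exists_perm_apply_single hΘ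
  refine ⟨τ, fun p u ↦ ?_⟩
  have hord : ordHom K p₀ (τ p) = Θ.addMonoidHomCongrLeft (ordHom K p₀ p) := by
    rw [ordHom, ← hτ]
    exact E.symm_apply_apply _
  rw [hord]
  exact congr(ordHom K p₀ p (.ofMul $(θu.symm_apply_apply u)))

end OrdHom

lemma exists_perm_map_ratio (θ : halfSpaceRing σ k K ≃ₐ[k] halfSpaceRing σ k K)
    (p₀ : ℙ k (σ →₀ k)) :
    ∃ τ : Equiv.Perm (ℙ k (σ →₀ k)), ∀ p q, ∃ c : k,
      θ (ratio K p q) = c • formFrac K (τ q) (τ p).rep := by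
  classical
  obtain ⟨τ, hτ⟩ := exists_perm_ordHom_comp θ p₀
  refine ⟨τ, fun p q ↦ ?_⟩
  have hord : ∀ r, ordHom K p₀ r
      (.ofMul (Units.mapEquiv θ (ratio K p q) / ratio K (τ p) (τ q))) = 0 := by
    refine τ.surjective.forall.mpr fun r ↦ ?_
    rw [ofMul_div, map_sub, hτ, ordHom_ratio, ordHom_ratio, sub_eq_zero]
    simp [Pi.single_apply]
  obtain ⟨c, hc⟩ := exists_eq_algebraMap_of_ordHom_eq_zero hord
  refine ⟨c, ?_⟩
  rw [div_eq_iff_eq_mul] at hc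
  rw [Algebra.smul_def]
  exact congr(($hc : halfSpaceRing σ k K))

variable {p₀ q : ℙ k (σ →₀ k)}

lemma formFrac_injective : Function.Injective (formFrac K p₀ : (σ →₀ k) → _) := fun v w h ↦ by
  have h := congr(($h : K))
  rw [coe_formFrac, coe_formFrac, div_left_inj' (Units.ne_zero _)] at h
  exact sumSMulX_injective (IsFractionRing.injective _ K h)

lemma exists_linearEquiv_map_formFrac (θ : halfSpaceRing σ k K ≃ₐ[k] halfSpaceRing σ k K)
    (p₀ : ℙ k (σ →₀ k)) :
    ∃ (q : ℙ k (σ →₀ k)) (g : (σ →₀ k) ≃ₗ[k] (σ →₀ k)),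
      ∀ v, θ (formFrac K p₀ v) = formFrac K q (g v) := by
  obtain ⟨τ, hτ⟩ := exists_perm_map_ratio θ p₀
  let f : (σ →₀ k) →ₗ[k] halfSpaceRing σ k K := θ.toLinearMap ∘ₗ formFrac K p₀
  have hf (v) : f v ∈ LinearMap.range (formFrac K (τ p₀)) := by
    rcases eq_or_ne v 0 with rfl | hv
    · rw [map_zero]
      exact zero_mem _
    obtain ⟨a, ha⟩ := Projectivization.exists_smul_eq_mk_rep k v hv
    obtain ⟨c, hc⟩ := hτ (.mk k v hv) p₀
    have hva : v = (↑a⁻¹ : k) • (Projectivization.mk k v hv).rep := by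
      rw [← ha]
      exact (inv_smul_smul a v).symm
    have hfv : f v = (↑a⁻¹ * c) • formFrac K (τ p₀) (τ (.mk k v hv)).rep := by
      refine (congrArg f hva).trans ?_
      rw [map_smul, mul_smul]
      exact congr(_ • $hc)
    exact hfv ▸ ⟨_, map_smul _ _ _⟩
  let g := f.codRestrictOfInjective _ formFrac_injective hf
  have hg (v) : formFrac K (τ p₀) (g v) = f v := f.codRestrictOfInjective_comp_apply _ _ _ v
  have hginj : Function.Injective g := fun v w h ↦ formFrac_injective <| θ.injective <| by
    simpa [hg, f] using congr(formFrac K (τ p₀) $h)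
  exact ⟨τ p₀, .ofInjectiveEndo g hginj, fun v ↦ (hg v).symm⟩

variable (K) in
/-- The substitution of the quotients `g eᵢ / q` for the variables, where the `eᵢ` are the standard
coordinates and `q` stands for `formUnit K q`: the dehomogenisation of `linSubst g`. -/
noncomputable def dehomSubst (q : ℙ k (σ →₀ k)) (g : (σ →₀ k) →ₗ[k] (σ →₀ k)) :
    MvPolynomial σ k →ₐ[k] halfSpaceRing σ k K :=
  aeval fun i ↦ formFrac K q (g (.single i 1))

variable {g : (σ →₀ k) →ₗ[k] (σ →₀ k)} {s : MvPolynomial σ k}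

lemma coe_dehomSubst_mul_pow {d : ℕ} (hs : s.IsHomogeneous d) :
    (dehomSubst K q g s : K) * formUnit K q ^ d = algebraMap _ K (linSubst g s) := by
  rw [dehomSubst, ← Subalgebra.mvPolynomial_aeval_coe, ← aeval_mul_of_isHomogeneous hs, linSubst,
    ← aeval_algebraMap_apply]
  simp [coe_formFrac, Function.comp_def]

lemma mul_dehomSubst_formProd_pow_eq_iff {m : ℕ} (hs : s.IsHomogeneous (m * numForms σ k))
    (x : halfSpaceRing σ k K) :
    x * dehomSubst K q g (formProd σ k) ^ m = dehomSubst K q g s ↔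
      x * algebraMap _ K (linSubst g (formProd σ k)) ^ m = algebraMap _ K (linSubst g s) := by
  rw [← coe_dehomSubst_mul_pow (q := q) hs,
    ← coe_dehomSubst_mul_pow (q := q) isHomogeneous_formProd, mul_pow, ← pow_mul', ← mul_assoc,
    mul_left_inj' (pow_ne_zero _ (Units.ne_zero _))]
  norm_cast

lemma exists_linearEquiv_algEquiv_eq [Nonempty σ]
    (θ : halfSpaceRing σ k K ≃ₐ[k] halfSpaceRing σ k K) :
    ∃ g : (σ →₀ k) ≃ₗ[k] (σ →₀ k), ∀ (x : halfSpaceRing σ k K) (m : ℕ) (s : MvPolynomial σ k),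
      s.IsHomogeneous (m * numForms σ k) →
      x * algebraMap _ K (formProd σ k) ^ m = algebraMap _ K s →
      θ x * algebraMap _ K (formProd σ k) ^ m = algebraMap _ K (linSubst g.toLinearMap s) := by
  have ⟨i⟩ := ‹Nonempty σ›
  let p : ℙ k (σ →₀ k) := .mk k (.single i 1) (by simp)
  obtain ⟨q, g, hg⟩ := exists_linearEquiv_map_formFrac θ p
  have hθ (t) : θ (dehomSubst K p .id t) = dehomSubst K q g.toLinearMap t := by
    suffices (θ : _ →ₐ[k] _).comp (dehomSubst K p .id) = dehomSubst K q g.toLinearMap from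
      DFunLike.congr_fun this t
    ext i : 1
    simp [dehomSubst, hg]
  refine ⟨g, fun x m s hs hx ↦ ?_⟩
  have hxs : x * dehomSubst K p .id (formProd σ k) ^ m = dehomSubst K p .id s := by
    rwa [mul_dehomSubst_formProd_pow_eq_iff hs, linSubst_id]
  rw [← linSubst_formProd g, ← mul_dehomSubst_formProd_pow_eq_iff (q := q) hs, ← hθ, ← hθ, ← hxs,
    map_mul, map_pow]

end Automorphisms

section Away

open HomogeneousLocalization

variable {σ k : Type*} [Field k]

/-- The structure morphism of the algebra `k[X]_(f)` of fractions `s / f ^ m` of degree `0` over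
the field of constants. -/
noncomputable def awayConst (f : MvPolynomial σ k) : k →+* Away (homogeneousSubmodule σ k) f :=
  (fromZeroRingHom (homogeneousSubmodule σ k) (.powers f)).comp
    ((GradedRing.projZeroRingHom' (homogeneousSubmodule σ k)).comp
      (algebraMap k (MvPolynomial σ k)))

lemma val_awayConst (f : MvPolynomial σ k) (c : k) :
    (awayConst f c).val = algebraMap (MvPolynomial σ k) (Localization.Away f) (C c) := by
  rw [← Localization.mk_one_eq_algebraMap]
  exact congr(Localization.mk $(DirectSum.decompose_of_mem_same _
    ((mem_homogeneousSubmodule _ _).mpr (isHomogeneous_C σ c))) 1)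

variable [Finite (σ →₀ k)]

lemma formProd_mem : formProd σ k ∈ homogeneousSubmodule σ k (numForms σ k) :=
  (mem_homogeneousSubmodule _ _).mpr isHomogeneous_formProd

lemma numForms_pos [Nonempty σ] : 0 < numForms σ k := by
  have : Nonempty {v : σ →₀ k // v ≠ 0} := nonempty_subtype.mpr (exists_ne 0)
  exact Nat.card_pos

variable {K : Type*} [Field K] [Algebra (MvPolynomial σ k) K]
  [IsFractionRing (MvPolynomial σ k) K]

variable (σ k K) in
lemma isUnit_algebraMap_formProd : IsUnit (algebraMap (MvPolynomial σ k) K (formProd σ k)) :=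
  ((map_ne_zero_iff _ (IsFractionRing.injective _ K)).mpr formProd_ne_zero).isUnit

variable (σ k K) in
/-- The inclusion into the field `K` of rational functions of the coordinate ring of the
complement of all rational hyperplanes. -/
noncomputable def awayToField : Away (homogeneousSubmodule σ k) (formProd σ k) →+* K :=
  (IsLocalization.Away.lift (S := Localization.Away (formProd σ k)) _
    (isUnit_algebraMap_formProd σ k K)).comp (algebraMap _ _)

lemma awayToField_injective : Function.Injective (awayToField σ k K) := by
  rw [awayToField, RingHom.coe_comp]
  refine Function.Injective.comp ?_ (val_injective _)
  refine (IsLocalization.lift_injective_iff _).mpr fun x y ↦ ?_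
  rw [(IsLocalization.injective (Localization.Away (formProd σ k))
    (powers_le_nonZeroDivisors_of_noZeroDivisors formProd_ne_zero)).eq_iff,
    (IsFractionRing.injective _ K).eq_iff]

lemma awayToField_mk {m : ℕ} {s : MvPolynomial σ k}
    (hs : s ∈ homogeneousSubmodule σ k (m • numForms σ k)) :
    awayToField σ k K (.mk _ formProd_mem m s hs) * algebraMap _ K (formProd σ k) ^ m =
      algebraMap _ K s := by
  have h : (Away.mk _ formProd_mem m s hs).val *
      algebraMap _ (Localization.Away (formProd σ k)) (formProd σ k) ^ m = algebraMap _ _ s := by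
    rw [Away.val_mk, Localization.mk_eq_mk', ← map_pow]
    exact IsLocalization.mk'_spec _ s (⟨_, m, rfl⟩ : Submonoid.powers (formProd σ k))
  simpa [awayToField] using congr(IsLocalization.Away.lift _
    (isUnit_algebraMap_formProd σ k K) $h)

lemma eq_awayMk_of_mul_pow_eq {x : Away (homogeneousSubmodule σ k) (formProd σ k)} {m : ℕ}
    {s : MvPolynomial σ k} (hs : s ∈ homogeneousSubmodule σ k (m • numForms σ k))
    (hx : awayToField σ k K x * algebraMap _ K (formProd σ k) ^ m = algebraMap _ K s) :
    x = .mk _ formProd_mem m s hs :=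
  awayToField_injective <| ((isUnit_algebraMap_formProd σ k K).pow m).mul_right_cancel <|
    hx.trans (awayToField_mk hs).symm

variable [Algebra k K] [IsScalarTower k (MvPolynomial σ k) K]

lemma awayToField_awayConst (c : k) :
    awayToField σ k K (awayConst (formProd σ k) c) = algebraMap k K c := by
  rw [IsScalarTower.algebraMap_apply k (MvPolynomial σ k) K, awayToField, RingHom.comp_apply,
    HomogeneousLocalization.algebraMap_apply, val_awayConst, IsLocalization.Away.lift_eq]
  rfl

lemma range_awayToField :
    Set.range (awayToField σ k K) = halfSpaceRing σ k K := by
  ext x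
  refine ⟨?_, fun ⟨m, s, hs, hx⟩ ↦ ⟨.mk _ formProd_mem m s hs, ?_⟩⟩
  · rintro ⟨a, rfl⟩
    obtain ⟨m, s, hs, rfl⟩ := a.mk_surjective _ formProd_mem
    exact ⟨m, s, hs, awayToField_mk hs⟩
  · exact ((isUnit_algebraMap_formProd σ k K).pow m).mul_right_cancel
      ((awayToField_mk hs).trans hx.symm)

variable (σ k K) in
/-- The two descriptions of the coordinate ring of the Drinfeld half-space. -/
noncomputable def awayEquiv :
    Away (homogeneousSubmodule σ k) (formProd σ k) ≃+* halfSpaceRing σ k K :=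
  .ofBijective ((awayToField σ k K).codRestrict (halfSpaceRing σ k K)
    fun a ↦ range_awayToField.subset ⟨a, rfl⟩)
    ⟨fun _ _ h ↦ awayToField_injective congr(($h : K)),
      fun ⟨x, hx⟩ ↦ by
        obtain ⟨a, rfl⟩ := range_awayToField.superset hx
        exact ⟨a, rfl⟩⟩

lemma coe_awayEquiv (a : Away (homogeneousSubmodule σ k) (formProd σ k)) :
    (awayEquiv σ k K a : K) = awayToField σ k K a :=
  rfl

end Away

section AwayAutomorphisms

open HomogeneousLocalization

variable {σ k : Type*} [Finite σ] [Nonempty σ] [Field k] [Finite k]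

lemma exists_linearEquiv_map_awayMk
    (t : Away (homogeneousSubmodule σ k) (formProd σ k) ≃+*
      Away (homogeneousSubmodule σ k) (formProd σ k))
    (ht : ∀ c, t (awayConst _ c) = awayConst _ c) :
    ∃ g : (σ →₀ k) ≃ₗ[k] (σ →₀ k), ∀ m s hs hgs,
      t (.mk _ formProd_mem m s hs) = .mk _ formProd_mem m (linSubst g.toLinearMap s) hgs := by
  let K := FractionRing (MvPolynomial σ k)
  let e := awayEquiv σ k K
  have he (c) : e (awayConst _ c) = algebraMap k (halfSpaceRing σ k K) c :=
    Subtype.ext (awayToField_awayConst c)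
  let θ : halfSpaceRing σ k K ≃ₐ[k] halfSpaceRing σ k K :=
    .ofRingEquiv (f := (e.symm.trans t).trans e) fun c ↦ by simp [← he, ht]
  obtain ⟨g, hg⟩ := exists_linearEquiv_algEquiv_eq θ
  refine ⟨g, fun m s hs hgs ↦ eq_awayMk_of_mul_pow_eq (K := K) hgs ?_⟩
  simpa [θ, e, coe_awayEquiv] using hg (e (.mk _ formProd_mem m s hs)) m s hs (awayToField_mk hs)

end AwayAutomorphisms

section Proj

universe u

variable {A B τ τ' : Type u} [CommRing A] [SetLike τ A] [AddSubgroupClass τ A]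
  [CommRing B] [SetLike τ' B] [AddSubgroupClass τ' B]
  {𝒜 : ℕ → τ} [GradedRing 𝒜] {ℬ : ℕ → τ'} [GradedRing ℬ]

variable (𝒜) in
lemma isReduced_proj [_root_.IsReduced A] : IsReduced (Proj 𝒜) := by
  have (i : _) : IsReduced ((Proj.affineOpenCover 𝒜).openCover.X i) := by
    have : _root_.IsReduced (Localization.Away (i.2.1 : A)) :=
      isReduced_localizationPreserves (.powers (i.2.1 : A)) _ inferInstance
    refine (affine_isReduced_iff _).mpr (isReduced_of_injective
      (algebraMap (HomogeneousLocalization.Away 𝒜 (i.2.1 : A)) (Localization.Away (i.2.1 : A)))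
      (HomogeneousLocalization.val_injective _))
  exact .of_openCover _ (Proj.affineOpenCover 𝒜).openCover

lemma dense_projBasicOpen [IsDomain A] {f : A} (hf : f ≠ 0) :
    Dense (Proj.basicOpen 𝒜 f : Set (Proj 𝒜)) := by
  refine (Proj.isBasis_basicOpen 𝒜).dense_iff.mpr ?_
  rintro _ ⟨_, ⟨g, rfl⟩, rfl⟩ ⟨x, hx⟩
  have hg : g ≠ 0 := by
    rintro rfl
    exact hx (zero_mem x.asHomogeneousIdeal)
  let η : Proj 𝒜 := {
    asHomogeneousIdeal := ⊥
    isPrime := by simpa using Ideal.isPrime_bot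
    not_irrelevant_le h := x.not_irrelevant_le (h.trans bot_le) }
  exact ⟨η, hg, hf⟩

lemma irrelevant_le_map_of_comp_eq_id {f : 𝒜 →+*ᵍ ℬ} {g : ℬ →+*ᵍ 𝒜} (h : f.comp g = .id ℬ) :
    HomogeneousIdeal.irrelevant ℬ ≤ (HomogeneousIdeal.irrelevant 𝒜).map f := by
  refine (HomogeneousIdeal.irrelevant_le _).mpr fun i hi x hx ↦ ?_
  have hgx : g x ∈ HomogeneousIdeal.irrelevant 𝒜 :=
    HomogeneousIdeal.mem_irrelevant_of_mem _ hi (g.map_mem hx)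
  have hfgx : f (g x) = x := DFunLike.congr_fun h x
  exact hfgx ▸ Ideal.mem_map_of_mem f hgx

/-- The isomorphism `Proj ℬ ≅ Proj 𝒜` induced by an isomorphism `f` of graded rings with
inverse `g`. -/
noncomputable def projMapIso (f : 𝒜 →+*ᵍ ℬ) (g : ℬ →+*ᵍ 𝒜) (hfg : f.comp g = .id ℬ)
    (hgf : g.comp f = .id 𝒜) : Proj ℬ ≅ Proj 𝒜 where
  hom := Proj.map f (irrelevant_le_map_of_comp_eq_id hfg)
  inv := Proj.map g (irrelevant_le_map_of_comp_eq_id hgf)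
  hom_inv_id := by
    rw [← Proj.map_comp, ← Proj.map_id]
    congr 1
  inv_hom_id := by
    rw [← Proj.map_comp, ← Proj.map_id]
    congr 1

open HomogeneousLocalization in
lemma awayι_comp_map_of_map_mk {f : 𝒜 →+*ᵍ ℬ}
    (hf : HomogeneousIdeal.irrelevant ℬ ≤ (HomogeneousIdeal.irrelevant 𝒜).map f) {i : ℕ}
    (hi : 0 < i) {a : A} {b : B} (ha : a ∈ 𝒜 i) (hb : b ∈ ℬ i) (hab : f a = b)
    {t : Away 𝒜 a →+* Away ℬ b}
    (ht : ∀ m s hs, t (.mk 𝒜 ha m s hs) = .mk ℬ hb m (f s) (f.map_mem hs)) :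
    Proj.awayι ℬ b hb hi ≫ Proj.map f hf =
      Spec.map (CommRingCat.ofHom t) ≫ Proj.awayι 𝒜 a ha hi := by
  subst hab
  obtain rfl : t = Away.map f a := by
    ext1 x
    obtain ⟨m, s, hs, rfl⟩ := x.mk_surjective _ ha
    rw [ht, Away.map_mk]
  exact Proj.awayι_comp_map f hf hi a ha

end Proj

lemma exists_ringEquiv_specMap_eq {A B : CommRingCat} (e : Spec A ≅ Spec B) :
    ∃ t : B ≃+* A, Spec.map (CommRingCat.ofHom t) = e.hom :=
  ⟨(Scheme.Spec.preimageIso e).unop.commRingCatIsoToRingEquiv, Spec.map_preimage e.hom⟩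

section ProjectiveSpace

open HomogeneousLocalization

variable {k : Type*} [Field k] {n : ℕ}

/-- The substitution `linSubst g` as an endomorphism of the graded ring of polynomials. -/
noncomputable def gradedLinSubst (g : (Fin n →₀ k) →ₗ[k] (Fin n →₀ k)) :
    homogeneousSubmodule (Fin n) k →+*ᵍ homogeneousSubmodule (Fin n) k where
  __ := (linSubst g).toRingHom
  map_mem h := (mem_homogeneousSubmodule _ _).mpr
    (isHomogeneous_linSubst g ((mem_homogeneousSubmodule _ _).mp h))

lemma gradedLinSubst_comp_symm (g : (Fin n →₀ k) ≃ₗ[k] (Fin n →₀ k)) :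
    (gradedLinSubst g.toLinearMap).comp (gradedLinSubst g.symm.toLinearMap) = .id _ :=
  GradedRingHom.ext fun x ↦ linSubst_linSubst_symm g x

/-- The automorphism of projective space defined by an invertible linear map. -/
noncomputable def projSpaceIso (g : (Fin n →₀ k) ≃ₗ[k] (Fin n →₀ k)) :
    projSpace k n ≅ projSpace k n :=
  projMapIso (gradedLinSubst g.toLinearMap) (gradedLinSubst g.symm.toLinearMap)
    (gradedLinSubst_comp_symm g) (gradedLinSubst_comp_symm g.symm)

instance isReduced_projSpace : IsReduced (projSpace k n) :=
  isReduced_proj _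

lemma isEmpty_projSpace_zero : IsEmpty (projSpace k 0) where
  false x := by
    refine x.not_irrelevant_le ((HomogeneousIdeal.irrelevant_le _).mpr fun i hi f hf ↦ ?_)
    have hf : f.IsHomogeneous i := (mem_homogeneousSubmodule _ _).mp hf
    rw [eq_C_of_isEmpty f, hf.coeff_eq_zero (by simpa using hi.ne), C_0]
    exact zero_mem x.asHomogeneousIdeal

lemma awayι_comp_projStruct {f : MvPolynomial (Fin n) k} {d : ℕ}
    (hf : f ∈ homogeneousSubmodule (Fin n) k d) (hd : 0 < d) :
    Proj.awayι _ f hf hd ≫ projStruct k n = Spec.map (CommRingCat.ofHom (awayConst f)) := by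
  rw [projStruct, Proj.awayι_toSpecZero_assoc, ← Spec.map_comp]
  rfl

lemma mem_drinfeldSet_iff [Finite k] {x : projSpace k n} :
    x ∈ drinfeldSet k n ↔ formProd (Fin n) k ∉ x.asHomogeneousIdeal.toIdeal := by
  have := x.isPrime
  rw [formProd_mem_iff, (Finsupp.linearEquivFunOnFinite k k (Fin n)).toEquiv.exists_congr_left]
  simp [drinfeldSet, sumSMulX, Finsupp.linearCombination_apply, Finsupp.sum_fintype, C_mul']

end ProjectiveSpace

section HalfSpace

open HomogeneousLocalization

variable {k : Type*} [Field k] [Fintype k] {n : ℕ}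

lemma drinfeldOpens_eq_basicOpen :
    drinfeldOpens k n = Proj.basicOpen (homogeneousSubmodule (Fin n) k) (formProd (Fin n) k) :=
  TopologicalSpace.Opens.ext <| Set.ext fun _ ↦ mem_drinfeldSet_iff

instance isDominant_drinfeldι : IsDominant (drinfeldι k n) :=
  Opens.isDominant_ι (drinfeldOpens_eq_basicOpen (k := k) ▸
    dense_projBasicOpen formProd_ne_zero)

variable (k n) in
/-- The Drinfeld half-space is the spectrum of `k[X]_(F)`, where `F` is the product of all nonzero
linear forms. -/
noncomputable def drinfeldIsoSpec [Nonempty (Fin n)] : drinfeldScheme k n ≅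
    Spec (.of (Away (homogeneousSubmodule (Fin n) k) (formProd (Fin n) k))) :=
  Scheme.isoOfEq _ drinfeldOpens_eq_basicOpen ≪≫
    Proj.basicOpenIsoSpec _ _ formProd_mem numForms_pos

lemma drinfeldIsoSpec_hom_comp_awayι [Nonempty (Fin n)] :
    (drinfeldIsoSpec k n).hom ≫ Proj.awayι _ _ formProd_mem numForms_pos = drinfeldι k n := by
  simp [drinfeldIsoSpec, drinfeldι, Proj.awayι]

lemma exists_ringEquiv_comp_drinfeldι [Nonempty (Fin n)]
    (φ : drinfeldScheme k n ≅ drinfeldScheme k n) :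
    ∃ t : Away (homogeneousSubmodule (Fin n) k) (formProd (Fin n) k) ≃+*
        Away (homogeneousSubmodule (Fin n) k) (formProd (Fin n) k),
      φ.hom ≫ drinfeldι k n = (drinfeldIsoSpec k n).hom ≫ Spec.map (CommRingCat.ofHom t) ≫
        Proj.awayι _ _ formProd_mem numForms_pos := by
  let e := drinfeldIsoSpec k n
  obtain ⟨t, ht⟩ := exists_ringEquiv_specMap_eq (e.symm ≪≫ φ ≪≫ e)
  refine ⟨t, ?_⟩
  rw [ht, ← drinfeldIsoSpec_hom_comp_awayι]
  simp [e]

lemma map_awayConst_eq [Nonempty (Fin n)] {φ : drinfeldScheme k n ⟶ drinfeldScheme k n}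
    (hφ : φ ≫ drinfeldStruct k n = drinfeldStruct k n)
    {t : Away (homogeneousSubmodule (Fin n) k) (formProd (Fin n) k) →+*
        Away (homogeneousSubmodule (Fin n) k) (formProd (Fin n) k)}
    (ht : φ ≫ drinfeldι k n = (drinfeldIsoSpec k n).hom ≫ Spec.map (CommRingCat.ofHom t) ≫
        Proj.awayι _ _ formProd_mem numForms_pos) (c : k) :
    t (awayConst _ c) = awayConst _ c := by
  rw [drinfeldStruct, reassoc_of% ht, ← drinfeldIsoSpec_hom_comp_awayι, Category.assoc,
    awayι_comp_projStruct, ← Spec.map_comp] at hφ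
  have := Spec.map_injective ((cancel_epi _).mp hφ)
  exact congr($this c)

lemma exists_projSpaceIso_comp [Nonempty (Fin n)] (φ : drinfeldScheme k n ≅ drinfeldScheme k n)
    (hφ : φ.hom ≫ drinfeldStruct k n = drinfeldStruct k n) :
    ∃ g : (Fin n →₀ k) ≃ₗ[k] (Fin n →₀ k),
      drinfeldι k n ≫ (projSpaceIso g).hom = φ.hom ≫ drinfeldι k n := by
  obtain ⟨t, ht⟩ := exists_ringEquiv_comp_drinfeldι φ
  obtain ⟨g, hg⟩ := exists_linearEquiv_map_awayMk t (map_awayConst_eq hφ ht)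
  refine ⟨g, ?_⟩
  rw [ht, ← drinfeldIsoSpec_hom_comp_awayι, Category.assoc]
  congr 1
  exact awayι_comp_map_of_map_mk _ numForms_pos formProd_mem formProd_mem
    (linSubst_formProd g) fun m s hs ↦ hg m s hs _

lemma exists_iso_projSpace_comp (φ : drinfeldScheme k n ≅ drinfeldScheme k n)
    (hφ : φ.hom ≫ drinfeldStruct k n = drinfeldStruct k n) :
    ∃ ψ : projSpace k n ≅ projSpace k n, drinfeldι k n ≫ ψ.hom = φ.hom ≫ drinfeldι k n := by
  obtain rfl | hn := n.eq_zero_or_pos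
  · have := isEmpty_projSpace_zero (k := k)
    have : IsEmpty (drinfeldScheme k 0) := Function.isEmpty (drinfeldι k 0)
    exact ⟨.refl _, isInitialOfIsEmpty.hom_ext _ _⟩
  · have := Fin.pos_iff_nonempty.mp hn
    obtain ⟨g, hg⟩ := exists_projSpaceIso_comp φ hφ
    exact ⟨projSpaceIso g, hg⟩

end HalfSpace

end Drinfeld

/-- Every `k`-automorphism `φ` of the Drinfeld half-space `Ω(V)` over a finite
field `k` extends uniquely to a `k`-automorphism `ψ` of `P(V)`:
`ψ ∘ ι = ι ∘ φ` where `ι : Ω(V) → P(V)` is the open immersion. -/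
theorem stmt_0 (k : Type*) [Field k] [Fintype k]
    (V : Type*) [AddCommGroup V] [Module k V] [FiniteDimensional k V]
    (φ : drinfeldScheme k (finrank k V) ≅ drinfeldScheme k (finrank k V))
    (hφ : φ.hom ≫ drinfeldStruct k (finrank k V) = drinfeldStruct k (finrank k V)) :
    ∃! ψ : projSpace k (finrank k V) ≅ projSpace k (finrank k V),
      ψ.hom ≫ projStruct k (finrank k V) = projStruct k (finrank k V) ∧
        drinfeldι k (finrank k V) ≫ ψ.hom = φ.hom ≫ drinfeldι k (finrank k V) := by
  obtain ⟨ψ, hψ⟩ := Drinfeld.exists_iso_projSpace_comp φ hφ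
  refine ⟨ψ, ⟨ext_of_isDominant (drinfeldι k _) ?_, hψ⟩, fun ψ' ⟨_, hψ'⟩ ↦ ?_⟩
  · rw [← Category.assoc, hψ, Category.assoc]
    exact hφ
  · exact Iso.ext (ext_of_isDominant (drinfeldι k _) (hψ'.trans hψ.symm))
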